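/- Let d ≥ 2, ℓ ≥ 0 and p ≥ 1 be integers. Then there is no r > 0 with (Ξ_ℓ^{(d)})'(r) = 0 and (Ξ_{ℓ+p}^{(d)})'(r) = 0, i.e. the functions r ↦ (Ξ_ℓ^{(d)})'(r) and r ↦ (Ξ_{ℓ+p}^{(d)})'(r) have no common positive zeros. -/

import Mathlib

/-- The Bessel function of the first kind `J_ν`, defined for real order `ν`
by its power series (interpreted with real powers `(x/2)^(2k+ν)`). -/
noncomputable def besselJ (ν x : ℝ) : ℝ :=
  ∑' k : ℕ, (-1 : ℝ) ^ k / (k.factorial * Real.Gamma ((k : ℝ) + ν + 1)) *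
    (x / 2) ^ (2 * (k : ℝ) + ν)

/-- `Ξ_ℓ^{(d)}(r) = r^{(2-d)/2} J_{ℓ + d/2 - 1}(r)`. -/
noncomputable def Xi (d ℓ : ℕ) (r : ℝ) : ℝ :=
  r ^ (((2 : ℝ) - d) / 2) * besselJ ((ℓ : ℝ) + (d : ℝ) / 2 - 1) r

/-!
With `R ν z = ∑ (-z) ^ k / (k! Γ(k + ν + 1))` one has `J_ν(r) = (r / 2) ^ ν * R ν z` for
`z = r ^ 2 / 4`, and the equation `(Ξ_ℓ)'(r) = 0` becomes `ℓ * R ν z = 2 * z * R (ν + 1) z` with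
`ν = ℓ + d / 2 - 1`. By the three-term recurrence, the analogous equation for `ℓ + p` is then a
nontrivial polynomial equation for `z` over `ℚ`, so a common zero `r` is algebraic.

On the other hand, at an algebraic `r` the first equation makes the ratio of `R (ν + 1) z` and
`R ν z` algebraic, and the recurrence transfers this to order `-1/2` if `d` is odd and to order `0`
if `d` is even. At order `-1/2` it contradicts the Hermite-Lindemann theorem for `exp (i r)`, and at
order `0` it contradicts Siegel's theorem on `J₀`.

Both transcendence theorems come from the Siegel-Shidlovskii method, applied to systems for which
the linear forms have a zero estimate: exponentials `exp (a i * X)`, and the monomials of degree `N`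
in `f = R 0` and `X f'`. If all values were proportional to algebraic numbers, a small nonzero
auxiliary form at `z` would violate Liouville's inequality once the system is large enough. For the
second system the zero estimate reduces to the algebraic independence of the solutions of Bessel's
equation: one adjoins a second solution as `f * ∫ f⁻¹ ^ 2 / X` and uses that the Riccati equation of
the logarithmic derivative of `f` has no rational solution.
-/

section Connection

open Matrix

variable {k R ι : Type*} [CommRing k] [CommRing R] [Algebra k R] [Fintype ι]

/-- The connection `P ↦ θ P + P A` on row vectors over a ring `R` with a derivation `θ`. If
`θ F = A F`, then `θ (P ⬝ᵥ F) = (connection θ A P) ⬝ᵥ F`, so that `connection θ A` differentiates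
linear forms in the solutions of a linear differential system. -/
def connection (θ : Derivation k R R) (A : Matrix ι ι R) : Module.End k (ι → R) :=
  (θ : R →ₗ[k] R).compLeft ι + A.vecMulLinear.restrictScalars k

/-- The connection `u ↦ θ u - A u` on column vectors. Its kernel consists of the solutions of the
differential system `θ F = A F`. -/
def dualConnection (θ : Derivation k R R) (A : Matrix ι ι R) : Module.End k (ι → R) :=
  connection θ (-Aᵀ)

/-- The matrix whose rows are the first `M` iterates of `connection θ A` at `P`. -/
def connectionMatrix {M : ℕ} (θ : Derivation k R R) (A : Matrix (Fin M) (Fin M) R)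
    (P : Fin M → R) : Matrix (Fin M) (Fin M) R :=
  of fun n => (connection θ A)^[n] P

variable (θ : Derivation k R R) (A : Matrix ι ι R)

lemma connection_apply (P : ι → R) (i : ι) : connection θ A P i = θ (P i) + (P ᵥ* A) i := rfl

lemma dualConnection_apply (u : ι → R) (i : ι) :
    dualConnection θ A u i = θ (u i) - (A *ᵥ u) i := by
  rw [dualConnection, connection_apply, vecMul_neg, vecMul_transpose, Pi.neg_apply, sub_eq_add_neg]

lemma connection_smul (a : R) (P : ι → R) :
    connection θ A (a • P) = θ a • P + a • connection θ A P := by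
  ext i
  simp only [connection_apply, Pi.smul_apply, Pi.add_apply, smul_eq_mul, θ.leibniz, smul_vecMul]
  ring

lemma derivation_dotProduct (u P : ι → R) :
    θ (u ⬝ᵥ P) = dualConnection θ A u ⬝ᵥ P + u ⬝ᵥ connection θ A P := by
  have hA : u ⬝ᵥ (P ᵥ* A) = (A *ᵥ u) ⬝ᵥ P := by
    rw [dotProduct_comm, ← dotProduct_mulVec, dotProduct_comm]
  have hu : dualConnection θ A u = θ ∘ u - A *ᵥ u := funext (dualConnection_apply θ A u)
  have hP : connection θ A P = θ ∘ P + P ᵥ* A := rfl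
  rw [hu, hP, sub_dotProduct, dotProduct_add, hA]
  simp only [dotProduct, map_sum, θ.leibniz, smul_eq_mul, Finset.sum_add_distrib,
    Function.comp_apply, mul_comm (P _)]
  ring

lemma derivation_iterate_dotProduct {F : ι → R} (hF : dualConnection θ A F = 0) (P : ι → R)
    (n : ℕ) : θ^[n] (P ⬝ᵥ F) = (connection θ A)^[n] P ⬝ᵥ F := by
  have h : Function.Semiconj (· ⬝ᵥ F) (connection θ A) θ := fun P => by
    simp only [dotProduct_comm _ F, derivation_dotProduct θ A, hF, zero_dotProduct, zero_add]
  exact (h.iterate_right n P).symm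

lemma connection_iterate_map {k' S : Type*} [CommRing k'] [CommRing S] [Algebra k' S]
    {θ : Derivation k R R} {θ' : Derivation k' S S} {φ : R →+* S} (h : ∀ a, θ' (φ a) = φ (θ a))
    (P : ι → R) (n : ℕ) :
    (connection θ' (A.map φ))^[n] (φ ∘ P) = φ ∘ (connection θ A)^[n] P := by
  have hφ : Function.Semiconj (φ ∘ ·) (connection θ A) (connection θ' (A.map φ)) := fun P => by
    ext i
    simp [connection_apply, h, RingHom.map_vecMul]
  exact (hφ.iterate_right n P).symm

variable {θ A}

/-- Let `W` be the set of vectors orthogonal to the first `r` iterates. As `W` is also orthogonal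
to the next iterate, it is stable under the dual connection, and then `derivation_dotProduct`
propagates the orthogonality to all iterates. -/
lemma dotProduct_connection_iterate_eq_zero {P : ι → R} {r : ℕ}
    (hr : ∀ u : ι → R, (∀ n < r, u ⬝ᵥ (connection θ A)^[n] P = 0) →
      u ⬝ᵥ (connection θ A)^[r] P = 0)
    {u : ι → R} (hu : ∀ n < r, u ⬝ᵥ (connection θ A)^[n] P = 0) (n : ℕ) :
    u ⬝ᵥ (connection θ A)^[n] P = 0 := by
  have hle (w : ι → R) (hw : ∀ n < r, w ⬝ᵥ (connection θ A)^[n] P = 0) :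
      ∀ n ≤ r, w ⬝ᵥ (connection θ A)^[n] P = 0 := fun n hn =>
    hn.lt_or_eq.elim (hw n) fun h => h ▸ hr w hw
  have hstable (w : ι → R) (hw : ∀ n < r, w ⬝ᵥ (connection θ A)^[n] P = 0) :
      ∀ n < r, dualConnection θ A w ⬝ᵥ (connection θ A)^[n] P = 0 := fun n hn => by
    have h := derivation_dotProduct θ A w ((connection θ A)^[n] P)
    rwa [← Function.iterate_succ_apply' (connection θ A), hle w hw n hn.le,
      hle w hw (n + 1) hn, map_zero, add_zero, eq_comm] at h
  induction n generalizing u with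
  | zero => exact hle u hu 0 r.zero_le
  | succ n ih =>
    have h := derivation_dotProduct θ A u ((connection θ A)^[n] P)
    rwa [ih hu, ih (hstable u hu), map_zero, zero_add, eq_comm,
      ← Function.iterate_succ_apply' (connection θ A)] at h

variable (θ A) in
/-- The submodule of vectors orthogonal to all iterates of `connection θ A` at `P`. -/
def iterateAnnihilator (P : ι → R) : Submodule R (ι → R) where
  carrier := {u | ∀ n, u ⬝ᵥ (connection θ A)^[n] P = 0}
  add_mem' hu hw n := by rw [add_dotProduct, hu n, hw n, add_zero]
  zero_mem' n := zero_dotProduct _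
  smul_mem' a u hu n := by rw [smul_dotProduct, hu n, smul_zero]

lemma dualConnection_mem_iterateAnnihilator {P u : ι → R} (hu : u ∈ iterateAnnihilator θ A P) :
    dualConnection θ A u ∈ iterateAnnihilator θ A P := fun n => by
  have h := derivation_dotProduct θ A u ((connection θ A)^[n] P)
  rwa [← Function.iterate_succ_apply' (connection θ A), hu n, hu (n + 1), map_zero, add_zero,
    eq_comm] at h

lemma eq_zero_of_single_mem_iterateAnnihilator [NoZeroDivisors R] [DecidableEq ι] {P : ι → R}
    {i : ι} {c : R} (hc : c ≠ 0) (h : Pi.single i c ∈ iterateAnnihilator θ A P) : P i = 0 := by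
  have h0 : Pi.single i c ⬝ᵥ P = 0 := h 0
  rw [single_dotProduct] at h0
  exact (mul_eq_zero.1 h0).resolve_left hc

lemma exists_row_dotProduct_eq_zero_of_det_eq_zero [IsDomain R] [LinearOrder ι]
    {B : Matrix ι ι R} (hB : B.det = 0) :
    ∃ r, ∀ u, (∀ i < r, u ⬝ᵥ B i = 0) → u ⬝ᵥ B r = 0 := by
  obtain ⟨c, hc, hcB⟩ := exists_vecMul_eq_zero_iff.mpr hB
  obtain ⟨r, hr⟩ :=
    (Function.support c).toFinite.exists_maximal (Function.support_nonempty_iff.2 hc)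
  refine ⟨r, fun u hu => (mul_eq_zero.1 ?_).resolve_left hr.1⟩
  have hsum : ∑ i, c i * (u ⬝ᵥ B i) = 0 := by
    have h := dotProduct_mulVec c B u
    rw [hcB, zero_dotProduct] at h
    simpa only [dotProduct, mulVec, mul_comm] using h
  rwa [Finset.sum_eq_single r (fun i _ hi => ?_) (by simp)] at hsum
  rcases hi.lt_or_gt with hi | hi
  · rw [hu i hi, mul_zero]
  · rw [Function.notMem_support.1 fun h => (hr.2 h hi.le).not_gt hi, zero_mul]

lemma iterateAnnihilator_ne_bot [IsDomain R] {M : ℕ} {A : Matrix (Fin M) (Fin M) R}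
    {P : Fin M → R} (hdet : (connectionMatrix θ A P).det = 0) :
    iterateAnnihilator θ A P ≠ ⊥ := by
  obtain ⟨u, hu, hker⟩ := exists_mulVec_eq_zero_iff.mpr hdet
  obtain ⟨r, hr⟩ := exists_row_dotProduct_eq_zero_of_det_eq_zero hdet
  refine (Submodule.ne_bot_iff _).2 ⟨u, dotProduct_connection_iterate_eq_zero (r := r)
    (fun w hw => hr w fun i hi => hw i hi) fun n hn => ?_, hu⟩
  rw [dotProduct_comm]
  exact congrFun hker ⟨n, hn.trans r.2⟩

lemma det_smul_single_eq_sum_adjugate_smul [DecidableEq ι] (B : Matrix ι ι R) (i : ι) :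
    B.det • Pi.single i (1 : R) = ∑ n, B.adjugate i n • B n := by
  ext j
  have h := congrFun (congrFun (adjugate_mul B) i) j
  simpa [mul_apply, one_apply, Pi.single_apply, eq_comm] using h.symm

end Connection

section Euler

open Polynomial

/-- The Euler derivation `X d/dX` on polynomials. -/
noncomputable def polyEuler (R : Type*) [CommRing R] : Derivation R R[X] R[X] :=
  (X : R[X]) • derivative'

variable {R S : Type*} [CommRing R] [CommRing S]

lemma polyEuler_apply (p : R[X]) : polyEuler R p = X * derivative p := rfl

lemma coeff_polyEuler (p : R[X]) (n : ℕ) : (polyEuler R p).coeff n = n * p.coeff n := by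
  rw [polyEuler_apply]
  cases n with
  | zero => simp
  | succ n => rw [coeff_X_mul, coeff_derivative]; push_cast; ring

lemma polyEuler_map (f : R →+* S) (p : R[X]) : polyEuler S (p.map f) = (polyEuler R p).map f := by
  simp [polyEuler_apply, derivative_map]

lemma natDegree_polyEuler_le (p : R[X]) : (polyEuler R p).natDegree ≤ p.natDegree := by
  refine natDegree_le_iff_coeff_eq_zero.2 fun n hn => ?_
  rw [coeff_polyEuler, coeff_eq_zero_of_natDegree_lt hn, mul_zero]

/-- The Euler derivation `X d/dX` on formal power series. -/
noncomputable def psEuler (R : Type*) [CommRing R] : Derivation R (PowerSeries R) (PowerSeries R) :=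
  (PowerSeries.X : PowerSeries R) • PowerSeries.derivative R

lemma coeff_psEuler (F : PowerSeries R) (n : ℕ) :
    PowerSeries.coeff n (psEuler R F) = n * PowerSeries.coeff n F := by
  change PowerSeries.coeff n (PowerSeries.X * PowerSeries.derivative R F) = _
  cases n with
  | zero => simp
  | succ n =>
    rw [PowerSeries.coeff_succ_X_mul, PowerSeries.coeff_derivative]
    push_cast
    ring

lemma coeff_psEuler_iterate (F : PowerSeries R) (n k : ℕ) :
    PowerSeries.coeff n ((psEuler R)^[k] F) = n ^ k * PowerSeries.coeff n F := by
  induction k with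
  | zero => simp
  | succ k ih => rw [Function.iterate_succ_apply', coeff_psEuler, ih]; ring

end Euler

section Vanishing

open Polynomial Matrix

variable {K ι : Type*} [Field K] [Fintype ι] (A : Matrix ι ι K[X]) (z : K) (v : ι → K)

/-- The value `P(z) ⬝ᵥ v` at the point `z` of a linear form `P` with polynomial coefficients. -/
noncomputable def evalPairing : (ι → K[X]) →ₗ[K] K :=
  ∑ i, v i • (leval z).comp (LinearMap.proj i)

lemma evalPairing_apply (P : ι → K[X]) :
    evalPairing z v P = (fun i => (P i).eval z) ⬝ᵥ v := by
  simp [evalPairing, dotProduct, LinearMap.sum_apply, mul_comm]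

lemma evalPairing_smul (a : K[X]) (P : ι → K[X]) :
    evalPairing z v (a • P) = a.eval z * evalPairing z v P := by
  simp [evalPairing_apply, dotProduct, Finset.mul_sum, mul_assoc]

variable {A z v} in
lemma evalPairing_connection_iterate_smul {n : ℕ} {P : ι → K[X]}
    (hP : ∀ m ≤ n, evalPairing z v ((connection (polyEuler K) A)^[m] P) = 0) (a : K[X]) :
    evalPairing z v ((connection (polyEuler K) A)^[n] (a • P)) = 0 := by
  induction n generalizing a P with
  | zero => exact (evalPairing_smul z v a P).trans (mul_eq_zero_of_right _ (hP 0 le_rfl))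
  | succ n ih =>
    rw [Function.iterate_succ_apply, connection_smul, iterate_map_add, map_add,
      ih (fun m hm => hP m (hm.trans n.le_succ)), ih (fun m hm => hP (m + 1) (by lia)), add_zero]

/-- The linear forms vanishing to order `j` at `z` in the direction `v`: for a solution `F` of the
system `X F' = A F` with `F z = v`, those for which `P ⬝ᵥ F` has a zero of order `j` at `z`. -/
noncomputable def vanishingSubmodule (j : ℕ) : Submodule K[X] (ι → K[X]) where
  carrier := {P | ∀ n < j, evalPairing z v ((connection (polyEuler K) A)^[n] P) = 0}
  add_mem' hP hQ n hn := by rw [iterate_map_add, map_add, hP n hn, hQ n hn, add_zero]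
  zero_mem' n _ := by rw [iterate_map_zero, map_zero]
  smul_mem' a _ hP _ hn :=
    evalPairing_connection_iterate_smul (fun _ hm => hP _ (hm.trans_lt hn)) a

variable {A z v} {j : ℕ}

lemma vanishingSubmodule_antitone : Antitone (vanishingSubmodule A z v) :=
  fun _ _ h _ hP n hn => hP n (hn.trans_le h)

lemma connection_iterate_mem_vanishingSubmodule {P : ι → K[X]} {n : ℕ}
    (hP : P ∈ vanishingSubmodule A z v (j + n)) :
    (connection (polyEuler K) A)^[n] P ∈ vanishingSubmodule A z v j := fun m hm => by
  rw [← Function.iterate_add_apply]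
  exact hP _ (by lia)

lemma pow_succ_dvd_of_pow_dvd_derivative [CharZero K] {a : K[X]} (ha : a.IsRoot z)
    (h : (X - C z) ^ j ∣ derivative a) : (X - C z) ^ (j + 1) ∣ a := by
  rcases eq_or_ne a 0 with rfl | ha0
  · exact dvd_zero _
  have hd : derivative a ≠ 0 := fun h0 => ha0 <| by
    rw [eq_C_of_derivative_eq_zero h0] at ha ⊢
    simpa using ha
  rw [← le_rootMultiplicity_iff hd, derivative_rootMultiplicity_of_root ha] at h
  rw [← le_rootMultiplicity_iff ha0]
  have := (rootMultiplicity_pos ha0).2 ha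
  lia

variable [DecidableEq ι]

lemma pow_dvd_of_forall_smul_single_mem [CharZero K] (hz : z ≠ 0) (hv : v ≠ 0) {a : K[X]}
    (h : ∀ i, a • Pi.single i 1 ∈ vanishingSubmodule A z v j) : (X - C z) ^ j ∣ a := by
  induction j generalizing a with
  | zero => simp
  | succ j ih =>
    obtain ⟨i, hi⟩ := Function.ne_iff.1 hv
    have hroot : a.IsRoot z := by
      have h0 := h i 0 j.succ_pos
      rw [Function.iterate_zero, id, evalPairing_smul, evalPairing_apply] at h0
      refine (mul_eq_zero.1 h0).resolve_right ?_
      simpa [dotProduct, Pi.single_apply, apply_ite (eval z)] using hi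
    have hEuler (i : ι) : polyEuler K a • Pi.single i 1 ∈ vanishingSubmodule A z v j := by
      have hrest : a • connection (polyEuler K) A (Pi.single i 1) ∈
          vanishingSubmodule A z v j := by
        have hsum : a • connection (polyEuler K) A (Pi.single i 1) =
            ∑ l, A i l • (a • Pi.single l (1 : K[X])) := by
          ext1 l
          simp [connection_apply, Pi.single_apply, apply_ite (polyEuler K), mul_comm]
        rw [hsum]
        exact Submodule.sum_mem _ fun l _ =>
          Submodule.smul_mem _ _ (vanishingSubmodule_antitone j.le_succ (h l))
      have hconn := connection_iterate_mem_vanishingSubmodule (n := 1) (h i)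
      rw [Function.iterate_one, connection_smul] at hconn
      exact (Submodule.add_mem_iff_left _ hrest).1 hconn
    have hcop : IsCoprime ((X - C z) ^ j) (X : K[X]) := IsCoprime.pow_left <| by
      simpa using isCoprime_X_sub_C_of_isUnit_sub (a := z) (b := 0) (by simpa using hz)
    exact pow_succ_dvd_of_pow_dvd_derivative hroot (hcop.dvd_of_dvd_mul_left (ih hEuler))

lemma pow_dvd_det_connectionMatrix [CharZero K] {M : ℕ} {A : Matrix (Fin M) (Fin M) K[X]}
    {v : Fin M → K} (hz : z ≠ 0) (hv : v ≠ 0) {P : Fin M → K[X]}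
    (h : P ∈ vanishingSubmodule A z v (j + M)) :
    (X - C z) ^ j ∣ (connectionMatrix (polyEuler K) A P).det := by
  refine pow_dvd_of_forall_smul_single_mem (A := A) hz hv fun i => ?_
  rw [det_smul_single_eq_sum_adjugate_smul]
  exact Submodule.sum_mem _ fun n _ => Submodule.smul_mem _ _ <|
    connection_iterate_mem_vanishingSubmodule <|
      vanishingSubmodule_antitone (Nat.add_le_add_left n.2.le j) h

end Vanishing

section LinearForms

open Polynomial Matrix

variable {R S : Type*} [CommRing R] [CommRing S] [Algebra R S]

lemma coeff_algebraMap_polynomial (p : R[X]) (n : ℕ) :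
    PowerSeries.coeff n (algebraMap R[X] (PowerSeries S) p) = algebraMap R S (p.coeff n) := by
  simp [PowerSeries.algebraMap_apply']

lemma algebraMap_polynomial_injective (h : Function.Injective (algebraMap R S)) :
    Function.Injective (algebraMap R[X] (PowerSeries S)) := fun p q hpq => by
  ext n
  exact h (by simp only [← coeff_algebraMap_polynomial, hpq])

lemma algebraMap_polynomial_X : algebraMap R[X] (PowerSeries S) X = PowerSeries.X := by
  simp [PowerSeries.algebraMap_apply']

lemma psEuler_algebraMap (p : R[X]) :
    psEuler S (algebraMap R[X] (PowerSeries S) p) =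
      algebraMap R[X] (PowerSeries S) (polyEuler R p) := by
  ext n
  simp [coeff_psEuler, coeff_algebraMap_polynomial, coeff_polyEuler]

lemma X_pow_dvd_psEuler_iterate {F : PowerSeries R} {T : ℕ} (h : PowerSeries.X ^ T ∣ F) (n : ℕ) :
    PowerSeries.X ^ T ∣ (psEuler R)^[n] F := by
  rw [PowerSeries.X_pow_dvd_iff] at h ⊢
  intro m hm
  rw [coeff_psEuler_iterate, h m hm, mul_zero]

variable {ι : Type*} [Fintype ι]

/-- The linear form `P ↦ ∑ i, P i * F i` with polynomial coefficients in the power series `F`. -/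
noncomputable def linearForm (R : Type*) [CommRing R] [Algebra R S] (F : ι → PowerSeries S) :
    (ι → R[X]) →ₗ[R[X]] PowerSeries S :=
  Fintype.linearCombination R[X] F

lemma linearForm_apply (F : ι → PowerSeries S) (P : ι → R[X]) :
    linearForm R F P = ∑ i, algebraMap R[X] (PowerSeries S) (P i) * F i := by
  simp [linearForm, Fintype.linearCombination_apply, Algebra.smul_def]

/-- The power series `F i` solve the linear differential system `X F' = A F`. -/
def SolvesEulerSystem (A : Matrix ι ι R[X]) (F : ι → PowerSeries S) : Prop :=
  dualConnection (psEuler S) (A.map (algebraMap R[X] (PowerSeries S))) F = 0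

lemma SolvesEulerSystem.psEuler_iterate_linearForm {A : Matrix ι ι R[X]} {F : ι → PowerSeries S}
    (hF : SolvesEulerSystem A F) (P : ι → R[X]) (n : ℕ) :
    (psEuler S)^[n] (linearForm R F P) = linearForm R F ((connection (polyEuler R) A)^[n] P) := by
  simp only [linearForm_apply]
  exact (derivation_iterate_dotProduct _ _ hF _ n).trans
    (congrArg (· ⬝ᵥ F) (connection_iterate_map A psEuler_algebraMap P n))

variable {M : ℕ} {A : Matrix (Fin M) (Fin M) R[X]} {P : Fin M → R[X]} {T : ℕ}

lemma SolvesEulerSystem.X_pow_dvd_det (hinj : Function.Injective (algebraMap R S))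
    {F : Fin M → PowerSeries S} (hF : SolvesEulerSystem A F) (hunit : ∃ i, IsUnit (F i))
    (hT : PowerSeries.X ^ T ∣ linearForm R F P) :
    X ^ T ∣ (connectionMatrix (polyEuler R) A P).det := by
  obtain ⟨i, hi⟩ := hunit
  set Δ := (connectionMatrix (polyEuler R) A P).det with hΔ
  have hdvd : PowerSeries.X ^ T ∣ algebraMap R[X] (PowerSeries S) Δ * F i := by
    have h : Δ • F i = linearForm R F (Δ • Pi.single i 1) := by
      rw [map_smul, linearForm, Fintype.linearCombination_apply_single, one_smul]
    rw [← Algebra.smul_def, h, hΔ, det_smul_single_eq_sum_adjugate_smul, map_sum]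
    refine Finset.dvd_sum fun n _ => ?_
    rw [map_smul, Algebra.smul_def]
    exact (hF.psEuler_iterate_linearForm P n ▸ X_pow_dvd_psEuler_iterate hT n).mul_left _
  rw [hi.dvd_mul_right, PowerSeries.X_pow_dvd_iff] at hdvd
  refine X_pow_dvd_iff.2 fun m hm => hinj ?_
  rw [map_zero, ← coeff_algebraMap_polynomial, hdvd m hm]

lemma natDegree_connection_iterate_le (hA : ∀ i j, (A i j).natDegree ≤ 1) {d : ℕ}
    (hP : ∀ i, (P i).natDegree ≤ d) (n : ℕ) (i : Fin M) :
    ((connection (polyEuler R) A)^[n] P i).natDegree ≤ d + n := by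
  induction n generalizing i with
  | zero => exact hP i
  | succ n ih =>
    rw [Function.iterate_succ_apply', connection_apply, vecMul, dotProduct]
    exact natDegree_add_le_of_degree_le
      ((natDegree_polyEuler_le _).trans ((ih i).trans (Nat.le_succ _)))
      (natDegree_sum_le_of_forall_le _ _ fun j _ =>
        (natDegree_mul_le_of_le (ih j) (hA j i)).trans le_rfl)

lemma natDegree_det_connectionMatrix_le (hA : ∀ i j, (A i j).natDegree ≤ 1) {d : ℕ}
    (hP : ∀ i, (P i).natDegree ≤ d) :
    (connectionMatrix (polyEuler R) A P).det.natDegree ≤ M * (d + M) := by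
  rw [Matrix.det_apply]
  refine natDegree_sum_le_of_forall_le _ _ fun τ _ => ?_
  refine (natDegree_smul_le _ _).trans ((natDegree_prod_le _ _).trans ?_)
  refine (Finset.sum_le_card_nsmul _ _ (d + M) fun i _ => ?_).trans (by simp)
  exact (natDegree_connection_iterate_le hA hP _ _).trans (Nat.add_le_add_left (τ i).2.le d)

lemma pow_dvd_map_det_connectionMatrix {K : Type*} [Field K] [CharZero K] [Algebra R K] {z : K}
    (hz : z ≠ 0) {v : Fin M → K} (hv : v ≠ 0) {k : ℕ}
    (h : ∀ n < k + M,
      (fun i => aeval z ((connection (polyEuler R) A)^[n] P i)) ⬝ᵥ v = 0) :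
    (X - C z) ^ k ∣ (connectionMatrix (polyEuler R) A P).det.map (algebraMap R K) := by
  let φ := mapRingHom (algebraMap R K)
  have hmap (n : ℕ) := connection_iterate_map A (θ' := polyEuler K) (φ := φ) (polyEuler_map _) P n
  have hmem : φ ∘ P ∈ vanishingSubmodule (A.map φ) z v (k + M) := fun n hn => by
    rw [hmap, evalPairing_apply, ← h n hn]
    simp only [φ, Function.comp_apply, coe_mapRingHom, eval_map_algebraMap]
  have hdet : connectionMatrix (polyEuler K) (A.map φ) (φ ∘ P) =
      φ.mapMatrix (connectionMatrix (polyEuler R) A P) := by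
    ext1 n i
    exact congrFun (hmap n) i
  have hdvd := pow_dvd_det_connectionMatrix hz hv hmem
  rwa [hdet, ← RingHom.map_det] at hdvd

/-- Otherwise the determinant of the iterates would vanish to order `T` at `0` and to order `k` at
`z`, contradicting the bound on its degree. -/
lemma SolvesEulerSystem.exists_aeval_dotProduct_ne_zero
    (hinj : Function.Injective (algebraMap R S)) {F : Fin M → PowerSeries S}
    (hF : SolvesEulerSystem A F) (hunit : ∃ i, IsUnit (F i)) (hA : ∀ i j, (A i j).natDegree ≤ 1)
    {d k : ℕ} (hP : ∀ i, (P i).natDegree ≤ d) (hT : PowerSeries.X ^ T ∣ linearForm R F P)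
    (hdet : (connectionMatrix (polyEuler R) A P).det ≠ 0)
    {K : Type*} [Field K] [CharZero K] [Algebra R K] (hK : Function.Injective (algebraMap R K))
    {z : K} (hz : z ≠ 0) {v : Fin M → K} (hv : v ≠ 0) (hk : M * (d + M) < T + k) :
    ∃ n < k + M, (fun i => aeval z ((connection (polyEuler R) A)^[n] P i)) ⬝ᵥ v ≠ 0 := by
  by_contra! hcon
  set Δ := (connectionMatrix (polyEuler R) A P).det
  have hz_dvd : (X - C z) ^ k ∣ Δ.map (algebraMap R K) :=
    pow_dvd_map_det_connectionMatrix hz hv hcon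
  have h0_dvd : X ^ T ∣ Δ.map (algebraMap R K) := by
    have h := map_dvd (algebraMap R K) (hF.X_pow_dvd_det hinj hunit hT)
    rwa [Polynomial.map_pow, map_X] at h
  have hcop : IsCoprime ((X : K[X]) ^ T) ((X - C z) ^ k) := IsCoprime.pow <| by
    simpa using isCoprime_X_sub_C_of_isUnit_sub (a := 0) (b := z) (by simpa using hz)
  have hdeg := natDegree_le_of_dvd (hcop.mul_dvd h0_dvd hz_dvd)
    ((Polynomial.map_ne_zero_iff hK).2 hdet)
  rw [natDegree_mul (pow_ne_zero _ X_ne_zero) (pow_ne_zero _ (X_sub_C_ne_zero z)), natDegree_pow,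
    natDegree_pow, natDegree_X, natDegree_X_sub_C] at hdeg
  have hΔK : (Δ.map (algebraMap R K)).natDegree ≤ Δ.natDegree := natDegree_map_le
  have hΔM : Δ.natDegree ≤ M * (d + M) := natDegree_det_connectionMatrix_le hA hP
  lia

end LinearForms

section CoefficientBounds

open Polynomial Matrix

variable {R : Type*} [CommRing R] [LinearOrder R] [IsStrictOrderedRing R]

lemma abs_coeff_mul_le_of_natDegree_le_one {p q : R[X]} {a B : R} (hq : q.natDegree ≤ 1)
    (hqa : ∀ n, |q.coeff n| ≤ a) (hpB : ∀ n, |p.coeff n| ≤ B) (n : ℕ) :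
    |(p * q).coeff n| ≤ 2 * a * B := by
  have hterm (m l : ℕ) : |p.coeff m * q.coeff l| ≤ a * B := by
    rw [abs_mul, mul_comm]
    gcongr
    exacts [(abs_nonneg _).trans (hqa 0), hqa l, hpB m]
  have hlead : |(p * C (q.coeff 1) * X).coeff n| ≤ a * B := by
    cases n with
    | zero => simpa using (abs_nonneg _).trans (hterm 0 0)
    | succ n => simpa only [coeff_mul_X, coeff_mul_C] using hterm n 1
  calc |(p * q).coeff n| = |(p * C (q.coeff 1) * X).coeff n + p.coeff n * q.coeff 0| := by
        conv_lhs => rw [eq_X_add_C_of_natDegree_le_one hq, mul_add, ← mul_assoc, coeff_add,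
          coeff_mul_C _ n (q.coeff 0)]
    _ ≤ a * B + a * B := (abs_add_le _ _).trans (add_le_add hlead (hterm n 0))
    _ = 2 * a * B := by ring

variable {M : ℕ} {A : Matrix (Fin M) (Fin M) R[X]} {P : Fin M → R[X]} {d : ℕ} {a B : R}

lemma abs_coeff_connection_le (hA : ∀ i j, (A i j).natDegree ≤ 1)
    (ha : ∀ i j n, |(A i j).coeff n| ≤ a) (hd : ∀ i, (P i).natDegree ≤ d)
    (hP : ∀ i n, |(P i).coeff n| ≤ B) (i : Fin M) (n : ℕ) :
    |(connection (polyEuler R) A P i).coeff n| ≤ (d + 2 * M * a) * B := by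
  have hB : 0 ≤ B := (abs_nonneg _).trans (hP i 0)
  have hEuler : |(polyEuler R (P i)).coeff n| ≤ d * B := by
    rw [coeff_polyEuler, abs_mul, Nat.abs_cast]
    rcases le_or_gt n d with h | h
    · gcongr
      exact hP i n
    · rw [coeff_eq_zero_of_natDegree_lt ((hd i).trans_lt h), abs_zero, mul_zero]
      positivity
  have hmul : |((P ᵥ* A) i).coeff n| ≤ M * (2 * a * B) := by
    simp only [Matrix.vecMul, dotProduct, finsetSum_coeff]
    refine (Finset.abs_sum_le_sum_abs _ _).trans ((Finset.sum_le_card_nsmul _ _ _ fun j _ =>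
      abs_coeff_mul_le_of_natDegree_le_one (hA j i) (ha j i) (hP j) n).trans (by simp))
  rw [connection_apply, coeff_add]
  linarith [abs_add_le ((polyEuler R (P i)).coeff n) (((P ᵥ* A) i).coeff n)]

lemma abs_coeff_connection_iterate_le (hA : ∀ i j, (A i j).natDegree ≤ 1)
    (ha : ∀ i j n, |(A i j).coeff n| ≤ a) (hd : ∀ i, (P i).natDegree ≤ d)
    (hP : ∀ i n, |(P i).coeff n| ≤ B) (k : ℕ) {W : R} (hW : d + k + 2 * M * a ≤ W) (i : Fin M)
    (n : ℕ) : |((connection (polyEuler R) A)^[k] P i).coeff n| ≤ W ^ k * B := by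
  induction k generalizing i n with
  | zero => simpa using hP i n
  | succ k ih =>
    have hB : 0 ≤ B := (abs_nonneg _).trans (hP i 0)
    have ha0 : 0 ≤ a := (abs_nonneg _).trans (ha i i 0)
    have hW0 : 0 ≤ W := le_trans (by positivity) hW
    push_cast at hW
    have hstep := abs_coeff_connection_le hA ha (natDegree_connection_iterate_le hA hd k)
      (ih (by linarith)) i n
    push_cast at hstep
    rw [Function.iterate_succ_apply', pow_succ', mul_assoc]
    exact hstep.trans (by gcongr; linarith)

end CoefficientBounds

section Siegel

attribute [local instance] Matrix.seminormedAddCommGroup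

/-- Siegel's lemma, with its exponent `#α / (#β - #α)` replaced by a natural number above it. -/
lemma exists_int_vec_abs_le {α β : Type*} [Fintype α] [Fintype β] (A : Matrix α β ℤ)
    {b e Q : ℕ} (hα : 0 < Fintype.card α) (hαβ : Fintype.card α < Fintype.card β) (hb : 1 ≤ b)
    (hA : ∀ i j, |A i j| ≤ b) (hQ : Fintype.card β * b ≤ Q)
    (he : Fintype.card α ≤ e * (Fintype.card β - Fintype.card α)) :
    ∃ t : β → ℤ, t ≠ 0 ∧ A.mulVec t = 0 ∧ ∀ j, |t j| ≤ Q ^ e := by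
  obtain ⟨t, ht, hAt, hn⟩ := Int.Matrix.exists_ne_zero_int_vec_norm_le A hαβ hα
  refine ⟨t, ht, hAt, fun j => ?_⟩
  have hAb : ‖A‖ ≤ b := (Matrix.norm_le_iff (by positivity)).mpr fun i j => by
    rw [Int.norm_eq_abs]
    exact_mod_cast hA i j
  have hbase : (Fintype.card β * max 1 ‖A‖ : ℝ) ≤ Q := calc
    (Fintype.card β * max 1 ‖A‖ : ℝ) ≤ Fintype.card β * b := by
      gcongr
      exact max_le (by exact_mod_cast hb) hAb
    _ ≤ Q := by exact_mod_cast hQ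
  have hQ1 : (1 : ℝ) ≤ Q := by
    exact_mod_cast (Nat.mul_pos (by lia) (by lia) : 0 < Fintype.card β * b).trans_le hQ
  have hαβ' : (Fintype.card α : ℝ) < Fintype.card β := by exact_mod_cast hαβ
  have hexp : (Fintype.card α : ℝ) / (Fintype.card β - Fintype.card α) ≤ (e : ℝ) := by
    rw [div_le_iff₀ (by linarith), ← Nat.cast_sub hαβ.le]
    exact_mod_cast he
  have htQ : ‖t‖ ≤ (Q : ℝ) ^ (e : ℝ) :=
    hn.trans ((Real.rpow_le_rpow (by positivity) hbase
      (div_nonneg (by positivity) (by linarith))).trans (Real.rpow_le_rpow_of_exponent_le hQ1 hexp))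
  have htj := (norm_le_pi_norm t j).trans htQ
  rw [Real.rpow_natCast, Int.norm_eq_abs] at htj
  exact_mod_cast htj

end Siegel

section AuxiliaryForm

open Polynomial

variable {M : ℕ} (s D : ℕ) (p : Fin M → Fin D → ℤ)

/-- The polynomials `∑ j < D, p i j * (D! / j!) ^ s * X ^ j`. The factorials make the coefficients
of the linear form with these coefficients in series of type `IsEType s` proportional to integer
linear forms in `p`. -/
noncomputable def auxPoly (i : Fin M) : ℤ[X] :=
  ∑ j : Fin D, C (p i j * ((D.factorial / (j : ℕ).factorial : ℕ) : ℤ) ^ s) * X ^ (j : ℕ)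

lemma coeff_auxPoly (i : Fin M) (m : ℕ) :
    (auxPoly s D p i).coeff m = if h : m < D then
      p i ⟨m, h⟩ * ((D.factorial / m.factorial : ℕ) : ℤ) ^ s else 0 := by
  simp only [auxPoly, finsetSum_coeff, coeff_C_mul_X_pow]
  split_ifs with h
  · rw [Finset.sum_eq_single ⟨m, h⟩ (fun j _ hj => if_neg fun hm => hj (Fin.ext hm.symm)) (by simp),
      if_pos rfl]
  · exact Finset.sum_eq_zero fun j _ => if_neg fun hm => h (by rw [hm]; exact j.2)

lemma natDegree_auxPoly_le (i : Fin M) : (auxPoly s D p i).natDegree ≤ D - 1 :=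
  natDegree_le_iff_coeff_eq_zero.2 fun m hm => by rw [coeff_auxPoly, dif_neg (by lia)]

variable {p}

lemma auxPoly_ne_zero (hp : p ≠ 0) : auxPoly s D p ≠ 0 := by
  refine fun h => hp (funext₂ fun i j => ?_)
  have hj : (auxPoly s D p i).coeff j = 0 := by rw [h, Pi.zero_apply, coeff_zero]
  rw [coeff_auxPoly, dif_pos j.2] at hj
  refine (mul_eq_zero.1 hj).resolve_right (pow_ne_zero _ (Nat.cast_ne_zero.2 ?_))
  exact (Nat.div_pos (Nat.factorial_le j.2.le) (Nat.factorial_pos _)).ne'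

lemma abs_coeff_auxPoly_le {B : ℕ} (hp : ∀ i j, |p i j| ≤ B) (i : Fin M) (m : ℕ) :
    |(auxPoly s D p i).coeff m| ≤ (B * D.factorial ^ s : ℕ) := by
  rw [coeff_auxPoly]
  split_ifs with h
  · rw [abs_mul, abs_pow, Nat.abs_cast]
    push_cast
    gcongr
    · exact hp _ _
    · exact_mod_cast Nat.div_le_self _ _
  · simp only [abs_zero]
    positivity

/-- The coefficients of `F` have the form `c m / (m!) ^ s` with integers `c m` of at most geometric
growth. For `s = 1` these are Siegel's `E`-functions with the simplest arithmetic. -/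
def IsEType (s B : ℕ) (F : PowerSeries ℚ) : Prop :=
  ∃ c : ℕ → ℤ, ∀ m, PowerSeries.coeff m F = c m / (m.factorial : ℚ) ^ s ∧ |c m| ≤ B ^ (m + 1)

variable {s D} in
lemma factorial_div_pow_mul_div_factorial_pow {j m : ℕ} (hj : j ≤ D) (hm : j ≤ m) (c : ℚ) :
    ((D.factorial / j.factorial : ℕ) : ℚ) ^ s * (c / ((m - j).factorial : ℚ) ^ s) =
      ((D.factorial : ℚ) / m.factorial) ^ s * ((m.choose j : ℚ) ^ s * c) := by
  rw [Nat.cast_div (Nat.factorial_dvd_factorial hj) (by positivity), Nat.cast_choose ℚ hm]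
  simp only [div_pow, mul_pow]
  field_simp

variable (p) in
lemma coeff_linearForm_auxPoly {s : ℕ} (hs : s ≠ 0) {F : Fin M → PowerSeries ℚ}
    {c : Fin M → ℕ → ℤ}
    (hc : ∀ i m, PowerSeries.coeff m (F i) = c i m / (m.factorial : ℚ) ^ s) (m : ℕ) :
    PowerSeries.coeff m (linearForm ℤ F (auxPoly s D p)) =
      ((D.factorial : ℚ) / m.factorial) ^ s *
        (∑ x : Fin M × Fin D, (m.choose x.2 : ℤ) ^ s * c x.1 (m - x.2) * p x.1 x.2 : ℤ) := by
  rw [linearForm_apply, map_sum, Fintype.sum_prod_type, Int.cast_sum, Finset.mul_sum]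
  refine Finset.sum_congr rfl fun i _ => ?_
  simp only [auxPoly, map_sum, Finset.sum_mul, Int.cast_sum, Finset.mul_sum]
  refine Finset.sum_congr rfl fun j _ => ?_
  have hmono (a : ℤ) : algebraMap ℤ[X] (PowerSeries ℚ) (C a * X ^ (j : ℕ)) =
      PowerSeries.C (a : ℚ) * PowerSeries.X ^ (j : ℕ) := by
    rw [PowerSeries.algebraMap_apply', coe_mul, coe_pow, coe_C, coe_X, map_mul, map_pow,
      PowerSeries.map_C, PowerSeries.map_X, eq_intCast]
  rw [hmono, mul_assoc, PowerSeries.coeff_C_mul, PowerSeries.coeff_X_pow_mul']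
  split_ifs with h
  · have hcoeff := factorial_div_pow_mul_div_factorial_pow (s := s) j.2.le h (c i (m - j))
    rw [hc, Int.cast_mul, Int.cast_pow, Int.cast_natCast, mul_assoc, hcoeff]
    push_cast
    ring
  · rw [Nat.choose_eq_zero_of_lt (not_le.1 h)]
    simp [hs]

lemma choose_pow_le {s m E : ℕ} (j : ℕ) (hm : m ≤ E) : (m.choose j) ^ s ≤ (2 ^ s) ^ E := by
  rw [← pow_mul, mul_comm s, pow_mul]
  exact Nat.pow_le_pow_left
    ((Nat.choose_le_two_pow _ _).trans (Nat.pow_le_pow_right (by norm_num) hm)) s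

variable {D}

lemma exists_linearForm_auxPoly_dvd {N B L : ℕ} {s : ℕ} {F : Fin (N + 1) → PowerSeries ℚ}
    (hs : s ≠ 0) (hB : 1 ≤ B) (hN : 1 ≤ N) (hF : ∀ i, IsEType s B (F i)) (hD : 2 * (L + 1) ≤ D) :
    ∃ p : Fin (N + 1) → Fin D → ℤ, p ≠ 0 ∧
      (∀ i j, |p i j| ≤ (((2 ^ (s + 1) * B) ^ (2 * (N + 1) ^ 2)) ^ D : ℕ)) ∧
      PowerSeries.X ^ (N * D + L) ∣ linearForm ℤ F (auxPoly s D p) := by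
  choose c hc hcB using hF
  have hND := Nat.mul_le_mul_right D hN
  have hcard : Fintype.card (Fin (N + 1) × Fin D) = (N + 1) * D := by simp
  let A : Matrix (Fin (N * D + L)) (Fin (N + 1) × Fin D) ℤ :=
    Matrix.of fun m x => ((m : ℕ).choose x.2 : ℤ) ^ s * c x.1 (m - x.2)
  have hA (m x) : |A m x| ≤ ((2 ^ s * B) ^ ((N + 1) * D) : ℕ) := by
    simp only [A, Matrix.of_apply]
    rw [abs_mul, abs_pow, Nat.abs_cast, mul_pow, Nat.cast_mul]
    gcongr
    · exact_mod_cast choose_pow_le _ (by lia)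
    · push_cast
      exact (hcB _ _).trans (pow_le_pow_right₀ (by exact_mod_cast hB) (by lia))
  obtain ⟨t, ht, hAt, htb⟩ := exists_int_vec_abs_le A
    (b := (2 ^ s * B) ^ ((N + 1) * D)) (e := 2 * (N + 1))
    (Q := 2 ^ ((N + 1) * D) * (2 ^ s * B) ^ ((N + 1) * D)) (by rw [Fintype.card_fin]; lia)
    (by rw [hcard, Fintype.card_fin]; lia) (Nat.one_le_pow _ _ (by positivity)) hA
    (by rw [hcard]; exact Nat.mul_le_mul_right _ Nat.lt_two_pow_self.le) (by
      rw [hcard, Fintype.card_fin]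
      calc N * D + L ≤ (N + 1) * D := by lia
        _ ≤ (N + 1) * (2 * ((N + 1) * D - (N * D + L))) :=
          Nat.mul_le_mul_left _ (by rw [add_mul]; lia)
        _ = _ := by ring)
  refine ⟨fun i j => t (i, j), fun h => ht (funext fun x => congrFun₂ h x.1 x.2),
    fun i j => (htb (i, j)).trans_eq ?_, PowerSeries.X_pow_dvd_iff.2 fun m hm => ?_⟩
  · push_cast
    rw [← mul_pow, ← mul_assoc, ← pow_succ', ← pow_mul, ← pow_mul]
    ring
  · have hm0 : ∑ x : Fin (N + 1) × Fin D, (m.choose x.2 : ℤ) ^ s * c x.1 (m - x.2) * t x = 0 :=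
      congrFun hAt ⟨m, hm⟩
    rw [coeff_linearForm_auxPoly D _ hs hc, hm0, Int.cast_zero, mul_zero]

end AuxiliaryForm

section Values

open Polynomial

/-- The power series `F` converges absolutely at `z`, with sum `w`. -/
def HasValueAt (z : ℂ) (F : PowerSeries ℚ) (w : ℂ) : Prop :=
  (Summable fun m => ‖((PowerSeries.coeff m F : ℚ) : ℂ) * z ^ m‖) ∧
    HasSum (fun m => ((PowerSeries.coeff m F : ℚ) : ℂ) * z ^ m) w

variable {z w w' : ℂ} {F G : PowerSeries ℚ}

lemma HasValueAt.add (hF : HasValueAt z F w) (hG : HasValueAt z G w') :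
    HasValueAt z (F + G) (w + w') := by
  simp only [HasValueAt, map_add, Rat.cast_add, add_mul]
  exact ⟨.of_nonneg_of_le (fun _ => norm_nonneg _) (fun _ => norm_add_le _ _) (hF.1.add hG.1),
    hF.2.add hG.2⟩

open Finset in
lemma HasValueAt.mul (hF : HasValueAt z F w) (hG : HasValueAt z G w') :
    HasValueAt z (F * G) (w * w') := by
  have hterm (m : ℕ) : ∑ kl ∈ antidiagonal m, ((PowerSeries.coeff kl.1 F : ℚ) : ℂ) * z ^ kl.1 *
      (((PowerSeries.coeff kl.2 G : ℚ) : ℂ) * z ^ kl.2) =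
        ((PowerSeries.coeff m (F * G) : ℚ) : ℂ) * z ^ m := by
    rw [PowerSeries.coeff_mul, Rat.cast_sum, Finset.sum_mul]
    refine Finset.sum_congr rfl fun kl hkl => ?_
    rw [← mem_antidiagonal.mp hkl, pow_add]
    push_cast
    ring
  have hsum := (summable_norm_sum_mul_antidiagonal_of_summable_norm hF.1 hG.1).congr fun m => by
    rw [hterm]
  refine ⟨hsum, ?_⟩
  rw [← hF.2.tsum_eq, ← hG.2.tsum_eq,
    tsum_mul_tsum_eq_tsum_sum_antidiagonal_of_summable_norm hF.1 hG.1, tsum_congr hterm]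
  exact hsum.of_norm.hasSum

lemma hasValueAt_algebraMap (z : ℂ) (p : ℤ[X]) :
    HasValueAt z (algebraMap ℤ[X] (PowerSeries ℚ) p) (aeval z p) := by
  have hterm (m : ℕ) :
      ((PowerSeries.coeff m (algebraMap ℤ[X] (PowerSeries ℚ) p) : ℚ) : ℂ) * z ^ m =
        p.coeff m * z ^ m := by
    simp [coeff_algebraMap_polynomial]
  have hzero (m : ℕ) (hm : m ∉ Finset.range (p.natDegree + 1)) :
      (p.coeff m : ℂ) * z ^ m = 0 := by
    rw [coeff_eq_zero_of_natDegree_lt (by simpa using hm), Int.cast_zero, zero_mul]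
  simp only [HasValueAt, hterm, aeval_eq_sum_range, zsmul_eq_mul]
  exact ⟨summable_of_ne_finset_zero fun m hm => by rw [hzero m hm, norm_zero],
    hasSum_sum_of_ne_finset_zero hzero⟩

lemma HasValueAt.pow (hF : HasValueAt z F w) (n : ℕ) : HasValueAt z (F ^ n) (w ^ n) := by
  induction n with
  | zero => simpa using hasValueAt_algebraMap z 1
  | succ n ih => simpa only [pow_succ] using ih.mul hF

lemma hasValueAt_sum {ι : Type*} (t : Finset ι) {f : ι → PowerSeries ℚ} {w : ι → ℂ}
    (h : ∀ i ∈ t, HasValueAt z (f i) (w i)) :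
    HasValueAt z (∑ i ∈ t, f i) (∑ i ∈ t, w i) := by
  classical
  induction t using Finset.induction_on with
  | empty => simpa using hasValueAt_algebraMap z 0
  | insert a t ha ih =>
    rw [Finset.sum_insert ha, Finset.sum_insert ha]
    exact (h a (t.mem_insert_self a)).add (ih fun i hi => h i (Finset.mem_insert_of_mem hi))

lemma hasValueAt_linearForm {ι : Type*} [Fintype ι] {F : ι → PowerSeries ℚ} {w : ι → ℂ}
    (hF : ∀ i, HasValueAt z (F i) (w i)) (P : ι → ℤ[X]) :
    HasValueAt z (linearForm ℤ F P) (∑ i, aeval z (P i) * w i) := by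
  rw [linearForm_apply]
  exact hasValueAt_sum _ fun i _ => (hasValueAt_algebraMap z (P i)).mul (hF i)

lemma factorial_pow_mul_factorial_le {s : ℕ} (hs : s ≠ 0) (T i : ℕ) :
    T.factorial ^ s * i.factorial ≤ (i + T).factorial ^ s := calc
  T.factorial ^ s * i.factorial ≤ T.factorial ^ s * i.factorial ^ s :=
    Nat.mul_le_mul_left _ (Nat.le_self_pow hs _)
  _ = (i.factorial * T.factorial) ^ s := by rw [mul_pow, mul_comm]
  _ ≤ (i + T).factorial ^ s := Nat.pow_le_pow_left
    (Nat.le_of_dvd (Nat.factorial_pos _) (Nat.factorial_mul_factorial_dvd_factorial_add i T)) s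

lemma HasValueAt.norm_le_of_X_pow_dvd (hF : HasValueAt z F w) {T s : ℕ} (hs : s ≠ 0) {Y g : ℝ}
    (hY : 0 ≤ Y) (hg : 0 ≤ g) (hT : PowerSeries.X ^ T ∣ F)
    (hb : ∀ m, ‖((PowerSeries.coeff m F : ℚ) : ℂ) * z ^ m‖ ≤ Y * g ^ m / (m.factorial : ℝ) ^ s) :
    ‖w‖ ≤ Y * g ^ T / (T.factorial : ℝ) ^ s * Real.exp g := by
  have hlow : ∑ m ∈ Finset.range T, ((PowerSeries.coeff m F : ℚ) : ℂ) * z ^ m = 0 :=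
    Finset.sum_eq_zero fun m hm => by
      rw [PowerSeries.X_pow_dvd_iff.1 hT m (Finset.mem_range.1 hm), Rat.cast_zero, zero_mul]
  have hexp : HasSum (fun n => g ^ n / (n.factorial : ℝ)) (Real.exp g) := by
    rw [Real.exp_eq_exp_ℝ]
    exact NormedSpace.expSeries_div_hasSum_exp g
  rw [← hF.2.tsum_eq, ← hF.2.summable.sum_add_tsum_nat_add T, hlow, zero_add]
  refine tsum_of_norm_bounded (hexp.mul_left _) fun i => (hb _).trans ?_
  have hfact : (T.factorial : ℝ) ^ s * i.factorial ≤ ((i + T).factorial : ℝ) ^ s := by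
    exact_mod_cast factorial_pow_mul_factorial_le hs T i
  calc Y * g ^ (i + T) / ((i + T).factorial : ℝ) ^ s
      ≤ Y * g ^ (i + T) / ((T.factorial : ℝ) ^ s * i.factorial) := by gcongr
    _ = Y * g ^ T / (T.factorial : ℝ) ^ s * (g ^ i / i.factorial) := by rw [pow_add]; field_simp

end Values

section AuxiliaryBounds

variable {s M B D H : ℕ} {F : Fin M → PowerSeries ℚ} {p : Fin M → Fin D → ℤ}

lemma abs_coeff_linearForm_auxPoly_le (hs : s ≠ 0) (hB : 1 ≤ B) (hF : ∀ i, IsEType s B (F i))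
    (hp : ∀ i j, |p i j| ≤ H) (m : ℕ) :
    |((PowerSeries.coeff m (linearForm ℤ F (auxPoly s D p)) : ℚ) : ℝ)| ≤
      (D.factorial : ℝ) ^ s * (M * D * H * B) * (2 ^ s * B) ^ m / (m.factorial : ℝ) ^ s := by
  choose c hc hcB using hF
  have hsum : |∑ x : Fin M × Fin D, (m.choose x.2 : ℤ) ^ s * c x.1 (m - x.2) * p x.1 x.2| ≤
      (M * D * ((2 ^ s) ^ m * B ^ (m + 1) * H) : ℕ) := by
    refine (Finset.abs_sum_le_sum_abs _ _).trans ((Finset.sum_le_card_nsmul _ _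
      ((2 ^ s) ^ m * (B : ℤ) ^ (m + 1) * H) fun x _ => ?_).trans (by simp))
    rw [abs_mul, abs_mul, abs_pow, Nat.abs_cast]
    gcongr
    · exact_mod_cast choose_pow_le _ le_rfl
    · exact (hcB _ _).trans (pow_le_pow_right₀ (by exact_mod_cast hB) (by lia))
    · exact hp _ _
  have hsum' := (Int.cast_le (R := ℝ)).mpr hsum
  rw [coeff_linearForm_auxPoly D p hs hc]
  push_cast at hsum' ⊢
  rw [abs_mul, abs_of_nonneg (by positivity : (0 : ℝ) ≤ ((D.factorial : ℝ) / m.factorial) ^ s)]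
  calc _ ≤ ((D.factorial : ℝ) / m.factorial) ^ s *
        (M * D * ((2 ^ s) ^ m * B ^ (m + 1) * H)) := by gcongr
    _ = _ := by rw [mul_pow, div_pow]; ring

lemma pow_le_factorial_mul_exp_pow (m k : ℕ) : (m : ℝ) ^ k ≤ k.factorial * Real.exp 1 ^ m := by
  have h := Real.pow_div_factorial_le_exp (m : ℝ) m.cast_nonneg k
  rwa [div_le_iff₀ (by positivity), mul_comm, ← Real.exp_one_pow] at h

lemma norm_value_psEuler_iterate_linearForm_auxPoly_le (hs : s ≠ 0) (hB : 1 ≤ B)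
    (hF : ∀ i, IsEType s B (F i)) (hp : ∀ i j, |p i j| ≤ H) {T : ℕ}
    (hT : PowerSeries.X ^ T ∣ linearForm ℤ F (auxPoly s D p)) (k : ℕ) {z w : ℂ}
    (hw : HasValueAt z ((psEuler ℚ)^[k] (linearForm ℤ F (auxPoly s D p))) w) :
    ‖w‖ ≤ k.factorial * ((D.factorial : ℝ) ^ s * (M * D * H * B)) *
        (Real.exp 1 * (2 ^ s * B) * ‖z‖) ^ T / (T.factorial : ℝ) ^ s *
        Real.exp (Real.exp 1 * (2 ^ s * B) * ‖z‖) := by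
  refine hw.norm_le_of_X_pow_dvd hs (by positivity) (by positivity)
    (X_pow_dvd_psEuler_iterate hT k) fun m => ?_
  have hcoeff := abs_coeff_linearForm_auxPoly_le hs hB hF hp m
  have hmk := pow_le_factorial_mul_exp_pow m k
  rw [coeff_psEuler_iterate, norm_mul, norm_pow]
  push_cast
  rw [norm_mul, norm_pow, Complex.norm_natCast, Complex.norm_ratCast]
  calc _ ≤ (k.factorial * Real.exp 1 ^ m) * ((D.factorial : ℝ) ^ s * (M * D * H * B) *
        (2 ^ s * B) ^ m / (m.factorial : ℝ) ^ s) * ‖z‖ ^ m := by gcongr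
    _ = _ := by rw [mul_pow, mul_pow]; ring

end AuxiliaryBounds

section Liouville

open Polynomial NumberField

variable {K : Type*} [Field K]

lemma isIntegral_pow_mul_aeval {q : ℤ} {ζ : K} (hζ : IsIntegral ℤ (q * ζ)) {Q : ℤ[X]} {d : ℕ}
    (hd : Q.natDegree ≤ d) : IsIntegral ℤ ((q : K) ^ d * aeval ζ Q) := by
  rw [aeval_eq_sum_range' (Nat.lt_succ_of_le hd), Finset.mul_sum]
  refine IsIntegral.sum _ fun j hj => ?_
  obtain ⟨e, rfl⟩ := Nat.exists_eq_add_of_le (Finset.mem_range_succ_iff.1 hj)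
  have hterm : (q : K) ^ (j + e) * (Q.coeff j • ζ ^ j) =
      algebraMap ℤ K (Q.coeff j * q ^ e) * (q * ζ) ^ j := by
    rw [zsmul_eq_mul, mul_pow, pow_add, algebraMap_int_eq, eq_intCast]
    push_cast
    ring
  rw [hterm]
  exact isIntegral_algebraMap.mul (hζ.pow j)

variable [NumberField K]

lemma one_le_norm_mul_house_pow (σ : K →+* ℂ) {α : K} (hα : IsIntegral ℤ α) (h0 : α ≠ 0) :
    1 ≤ ‖σ α‖ * house α ^ (Module.finrank ℚ K - 1) := by
  refine le_trans ?_ (norm_norm_le_norm_mul_house_pow α σ)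
  obtain ⟨n, hn⟩ := IsIntegrallyClosed.isIntegral_iff.mp (Algebra.isIntegral_norm ℚ hα)
  have hn0 : n ≠ 0 := fun h => h0 (Algebra.norm_eq_zero_iff.mp (by rw [← hn, h, map_zero]))
  rw [← hn, algebraMap_int_eq, eq_intCast, Int.norm_cast_rat, Int.norm_eq_abs]
  exact_mod_cast Int.one_le_abs hn0

lemma house_aeval_le {ζ : K} {ρ : ℝ} (hρ : 1 ≤ ρ) (hζ : house ζ ≤ ρ) {Q : ℤ[X]}
    {d : ℕ} {B : ℝ} (hd : Q.natDegree ≤ d) (hB : ∀ n, (|Q.coeff n| : ℝ) ≤ B) :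
    house (aeval ζ Q) ≤ (d + 1) * (B * ρ ^ d) := by
  have hB0 : 0 ≤ B := (abs_nonneg _).trans (hB 0)
  rw [aeval_eq_sum_range' (Nat.lt_succ_of_le hd)]
  refine (house_sum_le_sum_house _ _).trans ?_
  refine (Finset.sum_le_card_nsmul _ _ (B * ρ ^ d) fun j hj => ?_).trans (by simp)
  have hj' : house (ζ ^ j) ≤ ρ ^ d := calc
    house (ζ ^ j) ≤ house ζ ^ j := house_pow_le _ _
    _ ≤ ρ ^ j := pow_le_pow_left₀ (house_nonneg _) hζ j
    _ ≤ ρ ^ d := pow_le_pow_right₀ hρ (Finset.mem_range_succ_iff.1 hj)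
  rw [zsmul_eq_mul]
  refine (house_mul_le _ _).trans (mul_le_mul ?_ hj' (house_nonneg _) hB0)
  rw [house_intCast]
  simpa using hB j

variable {M : ℕ}

lemma exists_house_sum_aeval_mul_le (q : ℤ) (hq : q ≠ 0) (ζ : K) (v : Fin M → K) :
    ∃ S : ℝ, 1 ≤ S ∧ ∀ (d : ℕ) (B : ℝ) (Q : Fin M → ℤ[X]), (∀ i, (Q i).natDegree ≤ d) →
      (∀ i n, (|(Q i).coeff n| : ℝ) ≤ B) → 0 ≤ B →
      house ((q : K) ^ (d + 1) * ∑ i, aeval ζ (Q i) * v i) ≤ S ^ (d + 1) * B := by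
  set ρ : ℝ := max 1 (house ζ)
  have hρ : 1 ≤ ρ := le_max_left _ _
  set V : ℝ := 1 + ∑ i, house (v i)
  have hV1 : 1 ≤ V := le_add_of_nonneg_right (Finset.sum_nonneg fun i _ => house_nonneg _)
  have hV (i) : house (v i) ≤ V :=
    (Finset.single_le_sum (fun i _ => house_nonneg (v i)) (Finset.mem_univ i)).trans
      (le_add_of_nonneg_left zero_le_one)
  have hq1 : (1 : ℝ) ≤ |(q : ℝ)| := by exact_mod_cast Int.one_le_abs hq
  have hM1 : (1 : ℝ) ≤ M + 1 := le_add_of_nonneg_left M.cast_nonneg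
  refine ⟨|(q : ℝ)| * (M + 1) * 2 * ρ * V, ?_, fun d B Q hd hB hB0 => ?_⟩
  · exact one_le_mul_of_one_le_of_one_le (one_le_mul_of_one_le_of_one_le
      (one_le_mul_of_one_le_of_one_le (one_le_mul_of_one_le_of_one_le hq1 hM1) one_le_two) hρ) hV1
  have hqd : house ((q : K) ^ (d + 1)) ≤ |(q : ℝ)| ^ (d + 1) := by
    simpa [house_intCast] using house_pow_le (q : K) (d + 1)
  have hsum : house (∑ i, aeval ζ (Q i) * v i) ≤ M * ((d + 1) * (B * ρ ^ d) * V) := by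
    refine (house_sum_le_sum_house _ _).trans ((Finset.sum_le_card_nsmul _ _
      ((d + 1) * (B * ρ ^ d) * V) fun i _ => ?_).trans (by simp))
    exact (house_mul_le _ _).trans (mul_le_mul
      (house_aeval_le hρ (le_max_right _ _) (hd i) (hB i)) (hV i) (house_nonneg _) (by positivity))
  have hd2 : (d + 1 : ℝ) ≤ 2 ^ (d + 1) := by exact_mod_cast (Nat.lt_two_pow_self (n := d + 1)).le
  have hM2 : (M : ℝ) ≤ (M + 1) ^ (d + 1) :=
    (le_add_of_nonneg_right zero_le_one).trans (le_self_pow₀ hM1 d.succ_ne_zero)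
  calc _ ≤ |(q : ℝ)| ^ (d + 1) * (M * ((d + 1) * (B * ρ ^ d) * V)) :=
        (house_mul_le _ _).trans (mul_le_mul hqd hsum (house_nonneg _) (by positivity))
    _ ≤ |(q : ℝ)| ^ (d + 1) *
        ((M + 1) ^ (d + 1) * (2 ^ (d + 1) * (B * ρ ^ (d + 1)) * V ^ (d + 1))) := by
      gcongr
      · exact d.le_succ
      · exact le_self_pow₀ hV1 d.succ_ne_zero
    _ = _ := by simp only [mul_pow]; ring

lemma exists_one_le_mul_norm_sum_aeval_mul (σ : K →+* ℂ) (ζ : K) (v : Fin M → K) :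
    ∃ R : ℝ, 1 ≤ R ∧ ∀ (d : ℕ) (B : ℝ) (Q : Fin M → ℤ[X]), (∀ i, (Q i).natDegree ≤ d) →
      (∀ i n, (|(Q i).coeff n| : ℝ) ≤ B) → 0 ≤ B → ∑ i, aeval ζ (Q i) * v i ≠ 0 →
      1 ≤ R ^ (d + 1) * B ^ (Module.finrank ℚ K - 1) * ‖σ (∑ i, aeval ζ (Q i) * v i)‖ := by
  classical
  obtain ⟨q, hq0, hq⟩ := exists_integral_multiples ℤ ℚ (L := K) (insert ζ (Finset.univ.image v))
  have hqζ : IsIntegral ℤ (q * ζ) := by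
    simpa using hq ζ (Finset.mem_insert_self _ _)
  have hqv (i) : IsIntegral ℤ (q * v i) := by
    simpa using hq (v i) (Finset.mem_insert_of_mem (Finset.mem_image_of_mem _ (Finset.mem_univ i)))
  obtain ⟨S, hS, hhouse⟩ := exists_house_sum_aeval_mul_le q hq0 ζ v
  have hq1 : (1 : ℝ) ≤ |(q : ℝ)| := by exact_mod_cast Int.one_le_abs hq0
  set n := Module.finrank ℚ K - 1
  refine ⟨|(q : ℝ)| * S ^ n, one_le_mul_of_one_le_of_one_le hq1 (one_le_pow₀ hS), ?_⟩
  intro d B Q hd hB hB0 h0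
  set l := ∑ i, aeval ζ (Q i) * v i
  have hint : IsIntegral ℤ ((q : K) ^ (d + 1) * l) := by
    have hl : (q : K) ^ (d + 1) * l = ∑ i, (q : K) ^ d * aeval ζ (Q i) * (q * v i) := by
      rw [Finset.mul_sum]
      exact Finset.sum_congr rfl fun i _ => by ring
    rw [hl]
    exact IsIntegral.sum _ fun i _ => (isIntegral_pow_mul_aeval hqζ (hd i)).mul (hqv i)
  have hne : (q : K) ^ (d + 1) * l ≠ 0 := mul_ne_zero (pow_ne_zero _ (Int.cast_ne_zero.2 hq0)) h0
  calc (1 : ℝ) ≤ ‖σ ((q : K) ^ (d + 1) * l)‖ * house ((q : K) ^ (d + 1) * l) ^ n :=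
        one_le_norm_mul_house_pow σ hint hne
    _ ≤ ‖σ ((q : K) ^ (d + 1) * l)‖ * (S ^ (d + 1) * B) ^ n := by
      gcongr
      exacts [house_nonneg _, hhouse d B Q hd hB hB0]
    _ = (|(q : ℝ)| * S ^ n) ^ (d + 1) * B ^ n * ‖σ l‖ := by
      rw [map_mul, map_pow, map_intCast, norm_mul, norm_pow, Complex.norm_intCast]
      ring

end Liouville

section Growth

lemma factorial_pow_le_factorial_mul_add (D N L : ℕ) :
    D.factorial ^ N ≤ (N * D + L).factorial := by
  refine le_trans ?_ (Nat.factorial_le (Nat.le_add_right _ L))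
  induction N with
  | zero => simp
  | succ N ih =>
    rw [pow_succ, add_mul, one_mul]
    exact (Nat.mul_le_mul_right _ ih).trans (Nat.le_of_dvd (Nat.factorial_pos _)
      (Nat.factorial_mul_factorial_dvd_factorial_add _ _))

lemma exists_affine_pow_le_pow_mul_factorial (b : ℕ) :
    ∃ c : ℝ, 1 ≤ c ∧ ∀ D : ℕ, D ≠ 0 → (2 * D + b : ℝ) ^ (D + b) ≤ c ^ D * D.factorial := by
  have hb1 : (1 : ℝ) ≤ 2 + b := by linarith [b.cast_nonneg (α := ℝ)]
  refine ⟨(2 + b) ^ (1 + b) * Real.exp 1 * 2 ^ b, ?_, fun D hD => ?_⟩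
  · exact one_le_mul_of_one_le_of_one_le (one_le_mul_of_one_le_of_one_le (one_le_pow₀ hb1)
      (Real.one_le_exp zero_le_one)) (one_le_pow₀ one_le_two)
  have hD1 : 1 ≤ D := Nat.one_le_iff_ne_zero.2 hD
  have hlin : (2 * D + b : ℝ) ≤ (2 + b) * D := by
    exact_mod_cast (by nlinarith : 2 * D + b ≤ (2 + b) * D)
  have hpow : (D : ℝ) ≤ 2 ^ D := by exact_mod_cast Nat.lt_two_pow_self.le
  calc (2 * D + b : ℝ) ^ (D + b) ≤ ((2 + b) * D) ^ (D + b) := by gcongr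
    _ = (2 + b) ^ (D + b) * ((D : ℝ) ^ D * (D : ℝ) ^ b) := by rw [mul_pow, pow_add (D : ℝ)]
    _ ≤ (2 + b) ^ ((1 + b) * D) * ((D.factorial * Real.exp 1 ^ D) * (2 ^ D) ^ b) := by
      gcongr
      · nlinarith
      · exact pow_le_factorial_mul_exp_pow D D
    _ = _ := by rw [mul_pow, mul_pow, ← pow_mul, ← pow_mul, ← pow_mul, mul_comm b D]; ring

lemma pow_affine_le {x : ℝ} (hx : 1 ≤ x) (a b : ℕ) {D : ℕ} (hD : D ≠ 0) :
    x ^ (a * D + b) ≤ (x ^ (a + b)) ^ D := by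
  rw [← pow_mul]
  have hD1 : 1 ≤ D := Nat.one_le_iff_ne_zero.2 hD
  exact pow_le_pow_right₀ hx (by nlinarith)

lemma factorial_le_affine_pow {D k b : ℕ} (hk : k ≤ D + b) :
    (k.factorial : ℝ) ≤ (2 * D + b : ℝ) ^ k := by
  have hk' : (k.factorial : ℝ) ≤ (k : ℝ) ^ k := by exact_mod_cast Nat.factorial_le_pow k
  refine hk'.trans (pow_le_pow_left₀ k.cast_nonneg ?_ k)
  exact_mod_cast (by lia : k ≤ 2 * D + b)

lemma value_bound_le_pow_mul_factorial {D k s : ℕ} (hD : D ≠ 0) {c B H g : ℝ} (hB : 1 ≤ B)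
    (hH : 0 ≤ H) (hg : 1 ≤ g) (hk : (k.factorial : ℝ) ≤ c ^ D * D.factorial) (N L : ℕ) :
    k.factorial * ((D.factorial : ℝ) ^ s * ((N + 1 : ℕ) * D * H ^ D * B)) * g ^ (N * D + L) /
        ((N * D + L).factorial : ℝ) ^ s * Real.exp g ≤
      (c * H * ((N + 1 : ℕ) * 2 * B * g ^ (N + L) * Real.exp g)) ^ D *
        (D.factorial : ℝ) ^ (s + 1) / (D.factorial : ℝ) ^ (N * s) := by
  have hT : ((D.factorial : ℝ) ^ N) ^ s ≤ ((N * D + L).factorial : ℝ) ^ s := by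
    gcongr
    exact_mod_cast factorial_pow_le_factorial_mul_add D N L
  have hD2 : (D : ℝ) ≤ 2 ^ D := by exact_mod_cast Nat.lt_two_pow_self.le
  have hN : ((N + 1 : ℕ) : ℝ) ≤ ((N + 1 : ℕ) : ℝ) ^ D := le_self_pow₀ (by simp) hD
  have hc : 0 ≤ c ^ D * D.factorial := le_trans (by positivity) hk
  calc _ ≤ (c ^ D * D.factorial) * ((D.factorial : ℝ) ^ s *
        ((N + 1 : ℕ) ^ D * 2 ^ D * H ^ D * B ^ D)) * (g ^ (N + L)) ^ D /
        ((D.factorial : ℝ) ^ N) ^ s * Real.exp g ^ D := by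
        gcongr
        · exact le_self_pow₀ hB hD
        · exact pow_affine_le hg N L hD
        · exact le_self_pow₀ (Real.one_le_exp (by linarith)) hD
    _ = _ := by simp only [mul_pow, ← pow_mul]; ring

lemma exists_forall_abs_coeff_le {ι : Type*} [Finite ι] (A : Matrix ι ι (Polynomial ℤ)) :
    ∃ a : ℕ, ∀ i j n, |(A i j).coeff n| ≤ a := by
  cases nonempty_fintype ι
  refine ⟨∑ i, ∑ j, ∑ n ∈ (A i j).support, ((A i j).coeff n).natAbs, fun i j n => ?_⟩
  by_cases hn : n ∈ (A i j).support
  · have hle : ((A i j).coeff n).natAbs ≤ ∑ i, ∑ j, ∑ n ∈ (A i j).support,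
        ((A i j).coeff n).natAbs := by
      refine le_trans ?_ (Finset.single_le_sum (fun _ _ => Nat.zero_le _) (Finset.mem_univ i))
      refine le_trans ?_ (Finset.single_le_sum (fun _ _ => Nat.zero_le _) (Finset.mem_univ j))
      exact Finset.single_le_sum (f := fun n => ((A i j).coeff n).natAbs)
        (fun _ _ => Nat.zero_le _) hn
    rw [Int.abs_eq_natAbs]
    exact_mod_cast hle
  · rw [Polynomial.notMem_support_iff.1 hn, abs_zero]
    positivity

end Growth

section SiegelMethod

open Polynomial

variable {N s : ℕ} {A : Matrix (Fin (N + 1)) (Fin (N + 1)) ℤ[X]} {F : Fin (N + 1) → PowerSeries ℚ}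

/-- The zero estimate of the Siegel-Shidlovskii method: the iterates of a nonzero form `P` of
degree less than `D` that vanishes at the origin to order at least `N * D + L` are linearly
independent. -/
def ZeroEstimate (A : Matrix (Fin (N + 1)) (Fin (N + 1)) ℤ[X]) (F : Fin (N + 1) → PowerSeries ℚ)
    (L : ℕ) : Prop :=
  ∀ (D : ℕ) (P : Fin (N + 1) → ℤ[X]), (∀ i, (P i).natDegree < D) → P ≠ 0 →
    PowerSeries.X ^ (N * D + L) ∣ linearForm ℤ F P →
      (connectionMatrix (polyEuler ℤ) A P).det ≠ 0

/-- A system of series to which the Siegel-Shidlovskii method applies. -/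
structure IsSiegelSystem (s : ℕ) (A : Matrix (Fin (N + 1)) (Fin (N + 1)) ℤ[X])
    (F : Fin (N + 1) → PowerSeries ℚ) : Prop where
  natDegree_le_one : ∀ i j, (A i j).natDegree ≤ 1
  solvesEulerSystem : SolvesEulerSystem A F
  exists_isUnit : ∃ i, IsUnit (F i)
  exists_isEType : ∃ B, 1 ≤ B ∧ ∀ i, IsEType s B (F i)
  exists_zeroEstimate : ∃ L, ZeroEstimate A F L

namespace IsSiegelSystem

lemma exists_auxPoly_iterate_ne_zero (h : IsSiegelSystem s A F) (hs : s ≠ 0) (hN : 1 ≤ N)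
    {B : ℕ} (hB : 1 ≤ B) (hF : ∀ i, IsEType s B (F i)) {L : ℕ} (hL : ZeroEstimate A F L)
    {z : ℂ} (hz : z ≠ 0) {v : Fin (N + 1) → ℂ} (hv : v ≠ 0) :
    ∃ H : ℕ, 1 ≤ H ∧ ∀ D ≥ 2 * (L + 1), ∃ (p : Fin (N + 1) → Fin D → ℤ) (k : ℕ),
      k ≤ D + ((N + 1) ^ 2 + 1) ∧ (∀ i j, |p i j| ≤ (H ^ D : ℕ)) ∧
      PowerSeries.X ^ (N * D + L) ∣ linearForm ℤ F (auxPoly s D p) ∧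
      ∑ i, aeval z ((connection (polyEuler ℤ) A)^[k] (auxPoly s D p) i) * v i ≠ 0 := by
  refine ⟨(2 ^ (s + 1) * B) ^ (2 * (N + 1) ^ 2), Nat.one_le_pow _ _ (by positivity), fun D hD => ?_⟩
  obtain ⟨p, hp0, hp, hX⟩ := exists_linearForm_auxPoly_dvd hs hB hN hF hD
  have hdeg (i) : (auxPoly s D p i).natDegree ≤ D - 1 := natDegree_auxPoly_le s D p i
  have hdet := hL D _ (fun i => (hdeg i).trans_lt (by lia)) (auxPoly_ne_zero s D hp0) hX
  obtain ⟨D, rfl⟩ : ∃ D', D = D' + 1 := ⟨D - 1, by lia⟩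
  obtain ⟨k, hk, hne⟩ := h.solvesEulerSystem.exists_aeval_dotProduct_ne_zero
    (k := (N + 1) * (D + (N + 1)) + 1 - (N * (D + 1) + L)) Int.cast_injective h.exists_isUnit
    h.natDegree_le_one hdeg hX hdet Int.cast_injective hz hv (by rw [Nat.add_sub_cancel]; lia)
  exact ⟨p, k, by grind, hp, hX, hne⟩

lemma exists_small_value (h : IsSiegelSystem s A F) (hs : s ≠ 0) (hN : 1 ≤ N) {z : ℂ} (hz : z ≠ 0)
    {v : Fin (N + 1) → ℂ} (hv : v ≠ 0) {γ : ℂ} (hval : ∀ i, HasValueAt z (F i) (γ * v i)) :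
    ∃ (b D₀ : ℕ) (C : ℝ), 1 ≤ C ∧ ∀ D ≥ D₀, ∃ Q : Fin (N + 1) → ℤ[X],
      (∀ i, (Q i).natDegree ≤ 2 * D + b) ∧
      (∀ i n, (|(Q i).coeff n| : ℝ) ≤ C ^ D * (D.factorial : ℝ) ^ (s + 1)) ∧
      ∑ i, aeval z (Q i) * v i ≠ 0 ∧
      ‖γ‖ * ‖∑ i, aeval z (Q i) * v i‖ ≤
        C ^ D * (D.factorial : ℝ) ^ (s + 1) / (D.factorial : ℝ) ^ (N * s) := by
  obtain ⟨B, hB, hF⟩ := h.exists_isEType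
  obtain ⟨L, hL⟩ := h.exists_zeroEstimate
  obtain ⟨a, ha⟩ := exists_forall_abs_coeff_le A
  set b := (N + 1) ^ 2 + 1 + 2 * (N + 1) * a with hb
  obtain ⟨c, hc, hcD⟩ := exists_affine_pow_le_pow_mul_factorial b
  obtain ⟨H, hH, hmain⟩ := h.exists_auxPoly_iterate_ne_zero hs hN hB hF hL hz hv
  set g : ℝ := max 1 (Real.exp 1 * (2 ^ s * B) * ‖z‖)
  have hB' : (1 : ℝ) ≤ B := by exact_mod_cast hB
  have hg : 1 ≤ g := le_max_left _ _
  have hG : 1 ≤ (N + 1 : ℕ) * 2 * B * g ^ (N + L) * Real.exp g :=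
    one_le_mul_of_one_le_of_one_le (one_le_mul_of_one_le_of_one_le
      (by exact_mod_cast (by nlinarith : 1 ≤ (N + 1) * 2 * B)) (one_le_pow₀ hg))
      (Real.one_le_exp (by linarith))
  have hcH : 1 ≤ c * H := one_le_mul_of_one_le_of_one_le hc (by exact_mod_cast hH)
  refine ⟨b, 2 * (L + 1), _, one_le_mul_of_one_le_of_one_le hcH hG, fun D hD => ?_⟩
  obtain ⟨p, k, hk, hp, hX, hne⟩ := hmain D hD
  have hdeg (i) : (auxPoly s D p i).natDegree ≤ D := (natDegree_auxPoly_le s D p i).trans (by lia)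
  have hpow : (2 * D + b : ℝ) ^ k ≤ c ^ D * D.factorial :=
    (pow_le_pow_right₀ (by exact_mod_cast (by lia : 1 ≤ 2 * D + b)) (by lia)).trans
      (hcD D (by lia))
  refine ⟨_, fun i => (natDegree_connection_iterate_le h.natDegree_le_one hdeg k i).trans (by lia),
    fun i n => ?_, hne, ?_⟩
  · have hcoeff := (Int.cast_le (R := ℝ)).mpr (abs_coeff_connection_iterate_le h.natDegree_le_one
      ha hdeg (abs_coeff_auxPoly_le s D hp) k (W := 2 * D + b) (by rw [hb]; push_cast; lia) i n)
    push_cast at hcoeff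
    calc _ ≤ _ := hcoeff
      _ ≤ (c ^ D * D.factorial) * ((H : ℝ) ^ D * (D.factorial : ℝ) ^ s) := by gcongr
      _ = (c * H) ^ D * (D.factorial : ℝ) ^ (s + 1) := by rw [mul_pow]; ring
      _ ≤ _ := mul_le_mul_of_nonneg_right (pow_le_pow_left₀ (by positivity)
        (le_mul_of_one_le_right (by positivity) hG) D) (by positivity)
  · have hw := hasValueAt_linearForm hval ((connection (polyEuler ℤ) A)^[k] (auxPoly s D p))
    rw [← h.solvesEulerSystem.psEuler_iterate_linearForm] at hw
    have hle := norm_value_psEuler_iterate_linearForm_auxPoly_le hs hB hF hp hX k hw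
    simp only [mul_left_comm _ γ, ← Finset.mul_sum, norm_mul] at hle
    refine hle.trans (le_trans ?_ (value_bound_le_pow_mul_factorial (by lia) hB' (by positivity) hg
      ((factorial_le_affine_pow (by lia)).trans hpow) N L))
    have hzg : Real.exp 1 * (2 ^ s * B) * ‖z‖ ≤ g := le_max_right _ _
    push_cast
    gcongr

theorem eq_zero_of_hasValueAt {K : Type*} [Field K] [NumberField K] (σ : K →+* ℂ)
    (h : IsSiegelSystem s A F) (hN : Module.finrank ℚ K * (s + 1) + 1 ≤ N * s) {ζ : K}
    (hζ : ζ ≠ 0) {v : Fin (N + 1) → K} (hv : v ≠ 0) {γ : ℂ}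
    (hval : ∀ i, HasValueAt (σ ζ) (F i) (γ * σ (v i))) : γ = 0 := by
  have hs : s ≠ 0 := by rintro rfl; simp at hN
  have hN1 : 1 ≤ N := Nat.one_le_iff_ne_zero.2 (by rintro rfl; simp at hN)
  have hv' : (fun i => σ (v i)) ≠ 0 := fun hσv => hv (funext fun i =>
    σ.injective (by simpa using congrFun hσv i))
  obtain ⟨b, D₀, C, hC, hsmall⟩ := h.exists_small_value hs hN1 ((map_ne_zero σ).mpr hζ) hv' hval
  obtain ⟨R, hR, hliou⟩ := exists_one_le_mul_norm_sum_aeval_mul σ ζ v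
  obtain ⟨n, hn⟩ : ∃ n, Module.finrank ℚ K = n + 1 :=
    Nat.exists_eq_add_one.2 Module.finrank_pos
  have hbound : ∀ D ≥ D₀ + 1, ‖γ‖ ≤ (R ^ (2 + (b + 1)) * C ^ (n + 1)) ^ D / D.factorial := by
    intro D hD
    obtain ⟨Q, hdeg, hcoeff, hne, hle⟩ := hsmall D (by lia)
    have hσ : σ (∑ i, aeval ζ (Q i) * v i) = ∑ i, aeval (σ ζ) (Q i) * σ (v i) := by
      simp only [map_sum, map_mul, ← RingHom.toIntAlgHom_apply σ, ← aeval_algHom_apply]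
    have hlow := hliou _ _ Q hdeg hcoeff (by positivity)
      fun hQ => hne (by rw [← hσ, hQ, map_zero])
    rw [hσ, hn, Nat.add_sub_cancel] at hlow
    have hf : (1 : ℝ) ≤ D.factorial := Nat.one_le_cast.mpr D.factorial_pos
    calc ‖γ‖ ≤ _ := le_mul_of_one_le_right (norm_nonneg _) hlow
      _ = R ^ (2 * D + (b + 1)) * (C ^ D * (D.factorial : ℝ) ^ (s + 1)) ^ n *
          (‖γ‖ * ‖∑ i, aeval (σ ζ) (Q i) * σ (v i)‖) := by ring
      _ ≤ (R ^ (2 + (b + 1))) ^ D * (C ^ D * (D.factorial : ℝ) ^ (s + 1)) ^ n *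
          (C ^ D * (D.factorial : ℝ) ^ (s + 1) / (D.factorial : ℝ) ^ (N * s)) := by
        gcongr
        exact pow_affine_le hR 2 (b + 1) (by lia)
      _ = (R ^ (2 + (b + 1)) * C ^ (n + 1)) ^ D *
          ((D.factorial : ℝ) ^ ((n + 1) * (s + 1)) / (D.factorial : ℝ) ^ (N * s)) := by
        simp only [mul_pow, ← pow_mul]
        ring
      _ ≤ (R ^ (2 + (b + 1)) * C ^ (n + 1)) ^ D * ((D.factorial : ℝ) ^ ((n + 1) * (s + 1)) /
          (D.factorial : ℝ) ^ ((n + 1) * (s + 1) + 1)) := by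
        gcongr
        exact hn ▸ hN
      _ = _ := by rw [pow_succ _ ((n + 1) * (s + 1))]; field_simp
  have hγ : ‖γ‖ ≤ 0 := ge_of_tendsto (FloorSemiring.tendsto_pow_div_factorial_atTop _)
    (Filter.eventually_atTop.mpr ⟨_, hbound⟩)
  simpa using hγ

end IsSiegelSystem

end SiegelMethod

section MinimalSupport

lemma exists_minimal_support {R ι : Type*} [Semiring R] [Finite ι] {W : Submodule R (ι → R)}
    (hW : W ≠ ⊥) :
    ∃ u ∈ W, u ≠ 0 ∧ ∀ w ∈ W, Function.support w ⊂ Function.support u → w = 0 := by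
  obtain ⟨u, ⟨hu, hu0⟩, hmin⟩ := exists_minimalFor_of_wellFoundedLT
    (fun u => u ∈ W ∧ u ≠ 0) Function.support (W.exists_mem_ne_zero_of_ne_bot hW)
  exact ⟨u, hu, hu0, fun w hw hwu => by_contra fun hw0 => hwu.2 (hmin ⟨hw, hw0⟩ hwu.1)⟩

end MinimalSupport

section Exponential

open Polynomial Matrix

variable {M : ℕ} {a : Fin M → ℕ}

/-- The matrix of the Euler system solved by the exponentials `exp (a i * X)`. -/
noncomputable def expMatrix (a : Fin M → ℕ) : Matrix (Fin M) (Fin M) ℤ[X] :=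
  diagonal fun i => C (a i : ℤ) * X

lemma dualConnection_expMatrix (u : Fin M → ℤ[X]) (j : Fin M) :
    dualConnection (polyEuler ℤ) (expMatrix a) u j =
      polyEuler ℤ (u j) - C (a j : ℤ) * X * u j := by
  rw [dualConnection_apply, expMatrix, mulVec_diagonal]

lemma natDegree_expMatrix_le (a : Fin M → ℕ) (i j : Fin M) : (expMatrix a i j).natDegree ≤ 1 := by
  rw [expMatrix, diagonal_apply]
  split_ifs
  · exact (natDegree_C_mul_le _ _).trans natDegree_X_le
  · simp

lemma solvesEulerSystem_exp (a : Fin M → ℕ) :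
    SolvesEulerSystem (expMatrix a) fun i => PowerSeries.exp ℚ ^ a i := by
  have hexp : psEuler ℚ (PowerSeries.exp ℚ) = PowerSeries.X * PowerSeries.exp ℚ := by
    change PowerSeries.X * PowerSeries.derivative ℚ (PowerSeries.exp ℚ) = _
    rw [PowerSeries.derivative_exp]
  refine funext fun i => ?_
  rw [dualConnection_apply, expMatrix, diagonal_map (map_zero _), mulVec_diagonal,
    Derivation.leibniz_pow, hexp]
  rcases a i with _ | n
  · simp
  · simp only [map_mul, algebraMap_polynomial_X, Nat.add_sub_cancel, smul_eq_mul, nsmul_eq_mul,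
      pow_succ, map_natCast, Pi.zero_apply]
    ring

lemma isEType_exp_pow {n B : ℕ} (hn : n ≤ B) (hB : 1 ≤ B) :
    IsEType 1 B (PowerSeries.exp ℚ ^ n) := by
  refine ⟨fun m => n ^ m, fun m => ⟨?_, ?_⟩⟩
  · simp [PowerSeries.exp_pow_eq_rescale_exp, PowerSeries.coeff_exp, div_eq_mul_inv]
  · simp only [abs_pow, Nat.abs_cast]
    exact_mod_cast (Nat.pow_le_pow_left hn m).trans (Nat.pow_le_pow_right hB m.le_succ)

lemma hasValueAt_exp (z : ℂ) : HasValueAt z (PowerSeries.exp ℚ) (Complex.exp z) := by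
  have hterm (m : ℕ) : ((PowerSeries.coeff m (PowerSeries.exp ℚ) : ℚ) : ℂ) * z ^ m =
      z ^ m / m.factorial := by
    rw [PowerSeries.coeff_exp]
    simp [div_eq_inv_mul]
  simp only [HasValueAt, hterm]
  refine ⟨NormedSpace.norm_expSeries_div_summable z, ?_⟩
  rw [Complex.exp_eq_exp_ℂ]
  exact NormedSpace.expSeries_div_hasSum_exp z

/-- If `q / p` is a constant multiple of `exp ((b - a) X)`, then comparing the coefficients of
degree `deg p + deg q + 1` shows that `a = b`. -/
lemma eq_of_exp_wronskian_eq_zero {p q : ℤ[X]} (hp : p ≠ 0) (hq : q ≠ 0) {a b : ℕ}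
    (h : p * (polyEuler ℤ q - C (b : ℤ) * X * q) = (polyEuler ℤ p - C (a : ℤ) * X * p) * q) :
    a = b := by
  have hdeg : (p * polyEuler ℤ q - polyEuler ℤ p * q).natDegree ≤ p.natDegree + q.natDegree := by
    refine (natDegree_sub_le _ _).trans (max_le ?_ ?_)
    · exact natDegree_mul_le.trans (by gcongr; exact natDegree_polyEuler_le q)
    · exact natDegree_mul_le.trans (by gcongr; exact natDegree_polyEuler_le p)
  have hmul : p * polyEuler ℤ q - polyEuler ℤ p * q = C ((b : ℤ) - a) * (p * q) * X := by
    rw [C_sub]; linear_combination h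
  have htop := congrArg (coeff · (p.natDegree + q.natDegree + 1)) hmul
  simp only [coeff_mul_X, coeff_C_mul, coeff_mul_degree_add_degree] at htop
  rw [coeff_eq_zero_of_natDegree_lt (by lia)] at htop
  have hab := (mul_eq_zero.mp htop.symm).resolve_right
    (mul_ne_zero (leadingCoeff_ne_zero.mpr hp) (leadingCoeff_ne_zero.mpr hq))
  lia

lemma exists_single_mem_of_dualConnection_expMatrix_mem (ha : Function.Injective a)
    {W : Submodule ℤ[X] (Fin M → ℤ[X])}
    (hW : ∀ u ∈ W, dualConnection (polyEuler ℤ) (expMatrix a) u ∈ W) (hbot : W ≠ ⊥) :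
    ∃ i, ∃ c ≠ 0, Pi.single i c ∈ W := by
  obtain ⟨u, hu, hu0, hmin⟩ := exists_minimal_support hbot
  obtain ⟨i, hi⟩ := Function.ne_iff.mp hu0
  suffices hsingle : u = Pi.single i (u i) from ⟨i, u i, hi, by rwa [← hsingle]⟩
  refine funext fun j => ?_
  rcases eq_or_ne j i with rfl | hj
  · rw [Pi.single_eq_same]
  rw [Pi.single_eq_of_ne hj]
  by_contra huj
  set u' := dualConnection (polyEuler ℤ) (expMatrix a) u
  have hu' (l) : u' l = polyEuler ℤ (u l) - C (a l : ℤ) * X * u l := dualConnection_expMatrix u l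
  have hzero : u i • u' - u' i • u = 0 := by
    refine hmin _ (W.sub_mem (W.smul_mem _ (hW u hu)) (W.smul_mem _ hu)) ⟨fun l hl hl0 => hl ?_,
      fun hsub => hsub hi ?_⟩
    · simp [hu', hl0]
    · simp [mul_comm]
  have hj0 := congrFun hzero j
  simp only [Pi.sub_apply, Pi.smul_apply, smul_eq_mul, Pi.zero_apply, sub_eq_zero, hu'] at hj0
  exact hj (ha (eq_of_exp_wronskian_eq_zero hi huj hj0)).symm

lemma det_connectionMatrix_expMatrix_ne_zero (ha : Function.Injective a) {P : Fin M → ℤ[X]}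
    (hP : ∀ i, P i ≠ 0) : (connectionMatrix (polyEuler ℤ) (expMatrix a) P).det ≠ 0 := by
  intro hdet
  obtain ⟨i, c, hc, hmem⟩ := exists_single_mem_of_dualConnection_expMatrix_mem ha
    (fun _ => dualConnection_mem_iterateAnnihilator) (iterateAnnihilator_ne_bot hdet)
  exact hP i (eq_zero_of_single_mem_iterateAnnihilator hc hmem)

lemma not_X_pow_dvd_linearForm_exp {ι : Type*} [Fintype ι] [Nonempty ι] {a : ι → ℕ}
    (ha : Function.Injective a) {P : ι → ℤ[X]} (hP : ∀ i, P i ≠ 0) {d : ℕ}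
    (hd : ∀ i, (P i).natDegree ≤ d) {T : ℕ}
    (hT : Fintype.card ι * (d + Fintype.card ι) < T) :
    ¬ PowerSeries.X ^ T ∣ linearForm ℤ (fun i => PowerSeries.exp ℚ ^ a i) P := by
  intro hdvd
  let e : Fin (Fintype.card ι) ≃ ι := (Fintype.equivFin ι).symm
  have hsum : linearForm ℤ (fun i => PowerSeries.exp ℚ ^ a (e i)) (P ∘ e) =
      linearForm ℤ (fun i => PowerSeries.exp ℚ ^ a i) P := by
    simp only [linearForm_apply]
    exact e.sum_comp fun i => algebraMap ℤ[X] (PowerSeries ℚ) (P i) * PowerSeries.exp ℚ ^ a i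
  rw [← hsum] at hdvd
  have hdet := (solvesEulerSystem_exp (a ∘ e)).X_pow_dvd_det Int.cast_injective
    ⟨e.symm (Classical.arbitrary ι), (PowerSeries.isUnit_exp ℚ).pow _⟩ hdvd
  have hle := natDegree_le_of_dvd hdet
    (det_connectionMatrix_expMatrix_ne_zero (ha.comp e.injective) fun i => hP (e i))
  rw [natDegree_X_pow] at hle
  exact (hT.trans_le hle).not_ge (natDegree_det_connectionMatrix_le
    (natDegree_expMatrix_le (a ∘ e)) fun i => hd (e i))

/-- A form of small degree vanishing to high order has no zero coefficient, as otherwise it would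
be a form in fewer exponentials. -/
lemma zeroEstimate_exp (N : ℕ) :
    ZeroEstimate (expMatrix fun i : Fin (N + 1) => (i : ℕ))
      (fun i => PowerSeries.exp ℚ ^ (i : ℕ)) (N ^ 2 + 1) := by
  classical
  intro D P hD hP hX
  refine det_connectionMatrix_expMatrix_ne_zero Fin.val_injective fun i hi => ?_
  let S := {i // P i ≠ 0}
  obtain ⟨j, hj⟩ := Function.ne_iff.mp hP
  have : Nonempty S := ⟨⟨j, hj⟩⟩
  have hcard : Fintype.card S ≤ N := by
    have hlt : Fintype.card S < Fintype.card (Fin (N + 1)) :=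
      Fintype.card_subtype_lt (not_not.2 hi)
    rwa [Fintype.card_fin, Nat.lt_succ_iff] at hlt
  have hsum : linearForm ℤ (fun i : S => PowerSeries.exp ℚ ^ (i.1 : ℕ)) (fun i => P i) =
      linearForm ℤ (fun i : Fin (N + 1) => PowerSeries.exp ℚ ^ (i : ℕ)) P := by
    simp only [linearForm_apply]
    rw [← Fintype.sum_subtype_add_sum_subtype (fun i => P i ≠ 0), left_eq_add]
    refine Finset.sum_eq_zero fun x _ => ?_
    rw [not_not.1 x.2, map_zero, zero_mul]
  have hS : Fintype.card S * (D - 1 + Fintype.card S) ≤ N * (D - 1 + N) := by gcongr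
  refine not_X_pow_dvd_linearForm_exp (fun x y h => Subtype.ext (Fin.ext h)) (fun i : S => i.2)
    (d := D - 1) (fun i => Nat.le_sub_one_of_lt (hD i)) ?_ (hsum ▸ hX)
  have hND : N * (D - 1 + N) ≤ N * D + N ^ 2 := by
    rw [mul_add, sq]
    gcongr
    exact D.sub_le 1
  lia

lemma isSiegelSystem_exp (N : ℕ) :
    IsSiegelSystem 1 (expMatrix fun i : Fin (N + 1) => (i : ℕ))
      fun i => PowerSeries.exp ℚ ^ (i : ℕ) where
  natDegree_le_one := natDegree_expMatrix_le _
  solvesEulerSystem := solvesEulerSystem_exp _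
  exists_isUnit := ⟨0, (PowerSeries.isUnit_exp ℚ).pow _⟩
  exists_isEType := ⟨N + 1, by lia, fun i => isEType_exp_pow i.2.le (by lia)⟩
  exists_zeroEstimate := ⟨_, zeroEstimate_exp N⟩

/-- The Hermite-Lindemann theorem. -/
theorem not_isAlgebraic_exp {α : ℂ} (hα : IsAlgebraic ℚ α) (h0 : α ≠ 0) :
    ¬ IsAlgebraic ℚ (Complex.exp α) := by
  intro hexp
  let K := IntermediateField.adjoin ℚ {α, Complex.exp α}
  have : FiniteDimensional ℚ K := IntermediateField.finiteDimensional_adjoin fun x hx => by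
    rcases hx with rfl | rfl
    exacts [hα.isIntegral, hexp.isIntegral]
  have : NumberField K := ⟨⟩
  let ζ : K := ⟨α, IntermediateField.subset_adjoin ℚ _ (by simp)⟩
  let β : K := ⟨Complex.exp α, IntermediateField.subset_adjoin ℚ _ (by simp)⟩
  refine one_ne_zero ((isSiegelSystem_exp (Module.finrank ℚ K * 2 + 1)).eq_zero_of_hasValueAt
    K.val.toRingHom (by lia) (ζ := ζ) (fun h => h0 (congrArg Subtype.val h))
    (v := fun i => β ^ (i : ℕ)) (fun h => by simpa using congrFun h 0) fun i => ?_)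
  rw [one_mul, map_pow]
  exact (hasValueAt_exp α).pow i

end Exponential

section LogExtension

open Polynomial Matrix

variable {k S : Type*} [CommRing k] [CommRing S] [Algebra k S] (θ : Derivation k S S) (κ : S)

/-- The derivation of `S[X]` extending `θ` for which `X` is a primitive of `κ`. It models the
adjunction of a logarithm. -/
noncomputable def logDerivation : Derivation k S[X] S[X] :=
  PolynomialModule.equivPolynomialSelf.compDer θ.mapCoeffs +
    C κ • derivative'.restrictScalars k

lemma coeff_logDerivation (q : S[X]) (n : ℕ) :
    (logDerivation θ κ q).coeff n = θ (q.coeff n) + (n + 1) * κ * q.coeff (n + 1) := by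
  have h : logDerivation θ κ q =
      PolynomialModule.equivPolynomialSelf (θ.mapCoeffs q) + C κ * derivative q := rfl
  rw [h, coeff_add, coeff_C_mul, coeff_derivative]
  change θ (q.coeff n) + _ = _
  ring

lemma logDerivation_C (a : S) : logDerivation θ κ (C a) = C (θ a) := by
  ext n
  rcases eq_or_ne n 0 with rfl | hn <;> simp [coeff_logDerivation, coeff_C, *]

lemma logDerivation_X : logDerivation θ κ X = C κ := by
  ext n
  rcases n with _ | _ | n <;> simp [coeff_logDerivation, coeff_X, coeff_C]

lemma natDegree_logDerivation_le (q : S[X]) : (logDerivation θ κ q).natDegree ≤ q.natDegree := by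
  refine natDegree_le_iff_coeff_eq_zero.2 fun n hn => ?_
  rw [coeff_logDerivation, coeff_eq_zero_of_natDegree_lt hn,
    coeff_eq_zero_of_natDegree_lt (hn.trans n.lt_succ_self), map_zero, mul_zero, add_zero]

/-- The matrix of the system solved by `1, X, …, X ^ N` for the derivation `logDerivation θ κ`. -/
def logMatrix (N : ℕ) (κ : S) : Matrix (Fin (N + 1)) (Fin (N + 1)) S :=
  of fun j i => if (i : ℕ) + 1 = j then (j : ℕ) * κ else 0

variable {N : ℕ}

lemma logMatrix_mulVec_zero (u : Fin (N + 1) → S) : (logMatrix N κ *ᵥ u) 0 = 0 := by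
  simp [mulVec, dotProduct, logMatrix]

lemma logMatrix_mulVec_succ (u : Fin (N + 1) → S) (j : Fin N) :
    (logMatrix N κ *ᵥ u) j.succ = (j + 1) * κ * u j.castSucc := by
  rw [mulVec, dotProduct, Finset.sum_eq_single j.castSucc]
  · simp [logMatrix]
  · intro i _ hi
    have hij : (i : ℕ) ≠ j := fun h => hi (Fin.ext h)
    simp [logMatrix, hij]
  · simp

lemma vecMul_logMatrix (q : S[X]) (hq : q.natDegree ≤ N) (i : Fin (N + 1)) :
    ((fun j : Fin (N + 1) => q.coeff j) ᵥ* logMatrix N κ) i =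
      (i + 1) * κ * q.coeff (i + 1) := by
  rw [vecMul, dotProduct]
  refine i.lastCases ?_ fun i => ?_
  · rw [Finset.sum_eq_zero fun j _ => ?_, Fin.val_last,
      coeff_eq_zero_of_natDegree_lt (Nat.lt_succ_of_le hq), mul_zero]
    rw [logMatrix, of_apply, if_neg (by simp; lia), mul_zero]
  · rw [Finset.sum_eq_single i.succ]
    · simp [logMatrix, mul_comm]
    · intro j _ hj
      have hij : (i : ℕ) + 1 ≠ j := fun h => hj (Fin.ext h.symm)
      simp [logMatrix, hij]
    · simp

lemma connection_logMatrix_iterate_coeff {q : S[X]} (hq : q.natDegree ≤ N) (n : ℕ) :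
    (connection θ (logMatrix N κ))^[n] (fun j : Fin (N + 1) => q.coeff j) =
      fun j : Fin (N + 1) => ((logDerivation θ κ)^[n] q).coeff j := by
  induction n generalizing q with
  | zero => rfl
  | succ n ih =>
    rw [Function.iterate_succ_apply, Function.iterate_succ_apply,
      ← ih ((natDegree_logDerivation_le θ κ q).trans hq)]
    congr 1
    ext j
    rw [connection_apply, vecMul_logMatrix κ q hq, coeff_logDerivation]

lemma dualConnection_logMatrix_succ (u : Fin (N + 1) → S) (m : Fin N) :
    dualConnection θ (logMatrix N κ) u m.succ =
      θ (u m.succ) - (m + 1) * κ * u m.castSucc := by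
  rw [dualConnection_apply, logMatrix_mulVec_succ]

lemma dualConnection_logMatrix_of_forall_lt {u : Fin (N + 1) → S} {m : Fin (N + 1)}
    (hu : ∀ i < m, u i = 0) : dualConnection θ (logMatrix N κ) u m = θ (u m) := by
  cases m using Fin.cases with
  | zero => rw [dualConnection_apply, logMatrix_mulVec_zero, sub_zero]
  | succ m => rw [dualConnection_logMatrix_succ, hu _ m.castSucc_lt_succ, mul_zero, sub_zero]

variable {θ κ}

/-- The Wronskian condition makes the combination `v • ∇u - θ v • u`, with `v` the lowest
nonvanishing coordinate of `u`, raise the index of that coordinate by exactly one. -/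
lemma exists_single_last_mem_of_dualConnection_logMatrix_mem
    (hκ : ∀ n : ℕ, n ≠ 0 → ∀ u a : S, u ≠ 0 → u * θ a - a * θ u ≠ n * κ * u ^ 2)
    {W : Submodule S (Fin (N + 1) → S)}
    (hW : ∀ u ∈ W, dualConnection θ (logMatrix N κ) u ∈ W) (hbot : W ≠ ⊥) :
    ∃ c ≠ 0, Pi.single (Fin.last N) c ∈ W := by
  have hlow (m : Fin (N + 1)) : ∃ u ∈ W, u ≠ 0 ∧ ∀ i < m, u i = 0 := by
    induction m using Fin.induction with
    | zero =>
      obtain ⟨u, hu, hu0⟩ := W.exists_mem_ne_zero_of_ne_bot hbot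
      exact ⟨u, hu, hu0, fun i hi => absurd hi (Fin.not_lt_zero i)⟩
    | succ m ih =>
      obtain ⟨u, hu, hu0, hum⟩ := ih
      by_cases hv : u m.castSucc = 0
      · exact ⟨u, hu, hu0, fun i hi => (Fin.le_castSucc_iff.2 hi).lt_or_eq.elim (hum i) (· ▸ hv)⟩
      set v := u m.castSucc
      refine ⟨v • dualConnection θ (logMatrix N κ) u - θ v • u,
        W.sub_mem (W.smul_mem _ (hW u hu)) (W.smul_mem _ hu), fun h0 => ?_, fun i hi => ?_⟩
      · have hsucc := congrFun h0 m.succ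
        simp only [Pi.sub_apply, Pi.smul_apply, smul_eq_mul, Pi.zero_apply,
          dualConnection_logMatrix_succ] at hsucc
        refine hκ (m + 1) m.val.succ_ne_zero v (u m.succ) hv ?_
        push_cast
        linear_combination hsucc
      · have him := Fin.le_castSucc_iff.2 hi
        rw [Pi.sub_apply, Pi.smul_apply, Pi.smul_apply, smul_eq_mul, smul_eq_mul,
          dualConnection_logMatrix_of_forall_lt θ κ fun j hj => hum j (hj.trans_le him)]
        rcases him.lt_or_eq with hi | rfl
        · rw [hum i hi, map_zero, mul_zero, mul_zero, sub_zero]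
        · rw [mul_comm, sub_self]
  obtain ⟨u, hu, hu0, hlast⟩ := hlow (Fin.last N)
  have hsingle : u = Pi.single (Fin.last N) (u (Fin.last N)) := by
    ext i
    rcases (Fin.le_last i).lt_or_eq with hi | rfl
    · rw [Pi.single_eq_of_ne hi.ne, hlast i hi]
    · rw [Pi.single_eq_same]
  exact ⟨u (Fin.last N), fun h => hu0 (by rw [hsingle, h, Pi.single_zero]), by rwa [← hsingle]⟩

end LogExtension

section BesselSystem

open Polynomial Matrix

variable {k R S : Type*} [CommRing k] [CommRing R] [CommRing S] [Algebra k S] {N : ℕ}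

/-- The monomials `x ^ i * y ^ (N - i)` of degree `N` in `x` and `y`. -/
def binaryMonomials (N : ℕ) (x y : S) (i : Fin (N + 1)) : S :=
  x ^ (i : ℕ) * y ^ (N - i)

/-- The matrix of the system solved by the monomials of degree `N` in `x` and `y` if `θ x = y` and
`θ y = -(z * x)`. For `z = X`, the latter is Bessel's equation of order `0`. -/
def besselMatrix (N : ℕ) (z : R) : Matrix (Fin (N + 1)) (Fin (N + 1)) R :=
  of fun j i => if (i : ℕ) + 1 = j then (j : ℕ)
    else if (i : ℕ) = j + 1 then -((N - j : ℕ) * z) else 0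

lemma besselMatrix_map (φ : R →+* S) (z : R) :
    (besselMatrix N z).map φ = besselMatrix N (φ z) := by
  ext j i
  simp [besselMatrix, apply_ite φ]

lemma natDegree_besselMatrix_le (i j : Fin (N + 1)) :
    (besselMatrix N (X : R[X]) i j).natDegree ≤ 1 := by
  simp only [besselMatrix, of_apply]
  split_ifs
  · simp
  · rw [natDegree_neg]
    exact natDegree_mul_le.trans (by simpa using natDegree_X_le)
  · simp

lemma besselMatrix_mulVec_binaryMonomials (z x y : S) (j : Fin (N + 1)) :
    (besselMatrix N z *ᵥ binaryMonomials N x y) j =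
      (j : ℕ) * x ^ ((j : ℕ) - 1) * y ^ (N - j + 1) -
        (N - j : ℕ) * z * x ^ ((j : ℕ) + 1) * y ^ (N - j - 1) := by
  obtain ⟨j, hj⟩ := j
  let a (i : ℕ) : S := j * (x ^ i * y ^ (N - i))
  let b (i : ℕ) : S := (N - j : ℕ) * z * (x ^ i * y ^ (N - i))
  have hsum : (besselMatrix N z *ᵥ binaryMonomials N x y) ⟨j, hj⟩ =
      ∑ i : Fin (N + 1), ((if (i : ℕ) + 1 = j then a i else 0) -
        if (i : ℕ) = j + 1 then b i else 0) := by
    rw [mulVec, dotProduct]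
    refine Finset.sum_congr rfl fun i _ => ?_
    simp only [besselMatrix, of_apply, binaryMonomials, a, b]
    split_ifs with h h'
    · lia
    all_goals ring
  rw [hsum, Fin.sum_univ_eq_sum_range fun i => (if i + 1 = j then a i else 0) -
    if i = j + 1 then b i else 0, Finset.sum_sub_distrib]
  congr 1
  · cases j with
    | zero => simp
    | succ j =>
      simp only [Nat.add_left_inj, Finset.sum_ite_eq', Finset.mem_range]
      rw [if_pos (by lia), Nat.add_sub_cancel]
      simp only [a, show N - j = N - (j + 1) + 1 by lia]
      ring
  · rw [Finset.sum_ite_eq']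
    split_ifs with h
    · simp only [b, Nat.sub_sub]
      ring
    · rw [show N - j = 0 by simp at h; lia]
      simp

lemma dualConnection_besselMatrix_binaryMonomials {θ : Derivation k S S} {x y z : S}
    (hx : θ x = y) (hy : θ y = -(z * x)) :
    dualConnection θ (besselMatrix N z) (binaryMonomials N x y) = 0 := by
  ext j
  rw [dualConnection_apply, besselMatrix_mulVec_binaryMonomials, binaryMonomials, θ.leibniz,
    θ.leibniz_pow, θ.leibniz_pow, hx, hy]
  simp only [smul_eq_mul, nsmul_eq_mul, Pi.zero_apply]
  ring

end BesselSystem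

section BesselZeroEstimate

open Polynomial Matrix

section LogSolution

variable {k S : Type*} [CommRing k] [CommRing S] [Algebra k S] {θ : Derivation k S S} {f g e z : S}

/-- Reduction of order: if `f` solves `θ (θ f) = -z * f` and `κ = f⁻¹ ^ 2`, then a second solution
is `f` times a primitive of `κ`. -/
lemma logDerivation_C_mul_X (hf : θ f = g) (he : f * e = 1) :
    logDerivation θ (e ^ 2) (C f * X) = C g * X + C e := by
  rw [Derivation.leibniz, logDerivation_C, logDerivation_X, hf]
  simp only [smul_eq_mul, ← C_mul]
  rw [show f * e ^ 2 = e by linear_combination e * he]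
  ring

lemma logDerivation_C_mul_X_add_C (hf : θ f = g) (hg : θ g = -(z * f)) (he : f * e = 1) :
    logDerivation θ (e ^ 2) (C g * X + C e) = -(C z * (C f * X)) := by
  have hθe : θ e = -e ^ 2 * g := by
    rw [θ.leibniz_of_mul_eq_one (mul_comm f e ▸ he), hf, smul_eq_mul]
  rw [map_add, Derivation.leibniz, logDerivation_C, logDerivation_C, logDerivation_X, hg, hθe]
  simp only [smul_eq_mul, map_neg, map_mul]
  ring

lemma coeff_C_mul_X_pow_mul_C_mul_X_add_C_pow (i m n : ℕ) :
    ((C f * X) ^ i * (C g * X + C e) ^ m).coeff (i + n) =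
      f ^ i * (g ^ n * e ^ (m - n) * m.choose n) := by
  have h : (C g * X + C e) ^ m =
      ∑ j ∈ Finset.range (m + 1), C (g ^ j * e ^ (m - j) * m.choose j) * X ^ j := by
    rw [add_pow]
    refine Finset.sum_congr rfl fun j _ => ?_
    simp only [map_mul, map_pow, map_natCast]
    ring
  rw [mul_pow, ← C_pow, mul_assoc, coeff_C_mul, mul_comm (X ^ i), add_comm i, coeff_mul_X_pow, h]
  simp only [finsetSum_coeff, coeff_C_mul_X_pow, Finset.sum_ite_eq, Finset.mem_range]
  split_ifs with hn
  · rfl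
  · rw [Nat.choose_eq_zero_of_lt (by lia), Nat.cast_zero, mul_zero, mul_zero, mul_zero]

end LogSolution

section Riccati

variable {K : Type*} [Field K]

lemma psEuler_X_pow (n : ℕ) :
    psEuler K (PowerSeries.X ^ n) = (n : PowerSeries K) * PowerSeries.X ^ n := by
  ext m
  rw [coeff_psEuler, ← map_natCast (PowerSeries.C : K →+* _), PowerSeries.coeff_C_mul,
    PowerSeries.coeff_X_pow]
  split_ifs with h <;> simp [h]

/-- Otherwise the quotient of the two series would be a formal primitive of a series with a term
`X ^ (-e)`, contradicting that `psEuler` kills constant terms. -/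
lemma wronskian_ne_mul_sq {u a κ : PowerSeries K} (hu : u ≠ 0)
    (hκ : PowerSeries.constantCoeff κ ≠ 0) :
    u * psEuler K a - a * psEuler K u ≠ κ * u ^ 2 := by
  intro h
  set e := u.order.toNat
  obtain ⟨w, hw⟩ : PowerSeries.X ^ e ∣ u := PowerSeries.X_pow_order_dvd
  have hw0 : PowerSeries.constantCoeff w ≠ 0 := by
    have hc := PowerSeries.coeff_order hu
    change PowerSeries.coeff e u ≠ 0 at hc
    rwa [hw, PowerSeries.coeff_X_pow_mul', if_pos le_rfl, Nat.sub_self,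
      PowerSeries.coeff_zero_eq_constantCoeff_apply] at hc
  have hw1 : w ≠ 0 := by
    rintro rfl
    exact hw0 (map_zero _)
  obtain ⟨b, rfl⟩ : w ∣ a := (PowerSeries.isUnit_iff_constantCoeff.2 hw0.isUnit).dvd
  have hb : psEuler K b - (e : PowerSeries K) * b = κ * PowerSeries.X ^ e := by
    refine mul_left_cancel₀ (mul_ne_zero (pow_ne_zero e PowerSeries.X_ne_zero)
      (pow_ne_zero 2 hw1)) ?_
    rw [hw, Derivation.leibniz, Derivation.leibniz, psEuler_X_pow] at h
    simp only [smul_eq_mul] at h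
    linear_combination h
  have hcoeff := congrArg (PowerSeries.coeff e) hb
  rw [map_sub, coeff_psEuler, ← map_natCast (PowerSeries.C : K →+* _), PowerSeries.coeff_C_mul,
    sub_self, PowerSeries.coeff_mul_X_pow', if_pos le_rfl, Nat.sub_self,
    PowerSeries.coeff_zero_eq_constantCoeff_apply] at hcoeff
  exact hκ hcoeff.symm

variable [CharZero K]

lemma wronskian_ne_natCast_mul_sq {u a κ : PowerSeries K} (hu : u ≠ 0)
    (hκ : PowerSeries.constantCoeff κ ≠ 0) {n : ℕ} (hn : n ≠ 0) :
    u * psEuler K a - a * psEuler K u ≠ n * κ * u ^ 2 :=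
  wronskian_ne_mul_sq hu (by simp [hn, hκ])

variable {f g : PowerSeries K}

/-- The logarithmic derivative of `f` satisfies a Riccati equation, which has no rational solution
for reasons of degree. -/
lemma eq_zero_of_mul_psEuler_eq_mul (hf : psEuler K f = g) (hg : psEuler K g = -(PowerSeries.X * f))
    (hf0 : f ≠ 0) {p q : ℤ[X]}
    (h : algebraMap ℤ[X] (PowerSeries K) p * g = algebraMap ℤ[X] (PowerSeries K) q * f) :
    q = 0 := by
  have hθ := congrArg (psEuler K) h
  rw [Derivation.leibniz, Derivation.leibniz, hf, hg, psEuler_algebraMap, psEuler_algebraMap] at hθ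
  simp only [smul_eq_mul] at hθ
  have hriccati : q ^ 2 + X * p ^ 2 = q * polyEuler ℤ p - p * polyEuler ℤ q := by
    refine algebraMap_polynomial_injective (S := K) Int.cast_injective (mul_left_cancel₀ hf0 ?_)
    simp only [map_add, map_sub, map_mul, map_pow, algebraMap_polynomial_X]
    linear_combination (algebraMap ℤ[X] (PowerSeries K) (polyEuler ℤ p) -
      algebraMap ℤ[X] (PowerSeries K) q) * h - algebraMap ℤ[X] (PowerSeries K) p * hθ
  by_contra hq
  have hp : p ≠ 0 := by
    rintro rfl
    simp [hq] at hriccati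
  have hdeg : (q * polyEuler ℤ p - p * polyEuler ℤ q).natDegree ≤ q.natDegree + p.natDegree := by
    refine (natDegree_sub_le _ _).trans (max_le ?_ ?_)
    · exact natDegree_mul_le.trans (by gcongr; exact natDegree_polyEuler_le p)
    · rw [add_comm]
      exact natDegree_mul_le.trans (by gcongr; exact natDegree_polyEuler_le q)
  have hq2 : (q ^ 2).natDegree = 2 * q.natDegree := natDegree_pow q 2
  have hp2 : (X * p ^ 2).natDegree = 2 * p.natDegree + 1 := by
    rw [natDegree_X_mul (pow_ne_zero 2 hp), natDegree_pow]
  have hne : (q ^ 2).natDegree ≠ (X * p ^ 2).natDegree := by lia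
  rw [← hriccati] at hdeg
  rcases hne.lt_or_gt with hlt | hlt
  · rw [natDegree_add_eq_right_of_natDegree_lt hlt] at hdeg
    lia
  · rw [natDegree_add_eq_left_of_natDegree_lt hlt] at hdeg
    lia

end Riccati

section LogForm

variable {K : Type*} [Field K] {f g : PowerSeries K} {N : ℕ}

/-- The form `P` evaluated at the solution `f` times `X` and at the derivative of the latter for
`logDerivation (psEuler K) (f⁻¹ ^ 2)`: its coefficients are the components of the form along the
powers of the second, logarithmic solution of the differential equation of `f`. -/
noncomputable def logForm (f g : PowerSeries K) (P : Fin (N + 1) → ℤ[X]) : (PowerSeries K)[X] :=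
  (C.comp (algebraMap ℤ[X] (PowerSeries K)) ∘ P) ⬝ᵥ
    binaryMonomials N (C f * X) (C g * X + C f⁻¹)

lemma coeff_logForm (f g : PowerSeries K) (P : Fin (N + 1) → ℤ[X]) (n : ℕ) :
    (logForm f g P).coeff n = ∑ i, algebraMap ℤ[X] (PowerSeries K) (P i) *
      (binaryMonomials N (C f * X) (C g * X + C f⁻¹) i).coeff n := by
  simp only [logForm, dotProduct, finsetSum_coeff, Function.comp_apply, RingHom.comp_apply,
    coeff_C_mul]

lemma coeff_logForm_smul (f g : PowerSeries K) (p : ℤ[X]) (P : Fin (N + 1) → ℤ[X]) (n : ℕ) :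
    (logForm f g (p • P)).coeff n =
      algebraMap ℤ[X] (PowerSeries K) p * (logForm f g P).coeff n := by
  simp only [coeff_logForm, Finset.mul_sum, Pi.smul_apply, smul_eq_mul, map_mul, mul_assoc]

lemma natDegree_logForm_le (f g : PowerSeries K) (P : Fin (N + 1) → ℤ[X]) :
    (logForm f g P).natDegree ≤ N := by
  rw [logForm, dotProduct]
  refine natDegree_sum_le_of_forall_le _ _ fun i _ => (natDegree_C_mul_le _ _).trans ?_
  refine (natDegree_mul_le.trans (add_le_add (natDegree_pow_le_of_le i
    ((natDegree_C_mul_le f X).trans natDegree_X_le))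
    (natDegree_pow_le_of_le (N - i) (natDegree_linear_le (a := g) (b := f⁻¹))))).trans ?_
  lia

lemma coeff_logForm_self (f g : PowerSeries K) (P : Fin (N + 1) → ℤ[X]) :
    (logForm f g P).coeff N = linearForm ℤ (binaryMonomials N f g) P := by
  rw [coeff_logForm, linearForm_apply]
  refine Finset.sum_congr rfl fun i _ => ?_
  have h := coeff_C_mul_X_pow_mul_C_mul_X_add_C_pow (f := f) (g := g) (e := f⁻¹) i (N - i) (N - i)
  rw [Nat.add_sub_cancel' i.is_le] at h
  rw [binaryMonomials, binaryMonomials, h]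
  simp

/-- Up to the factor `f⁻¹`, the second highest coefficient is the derivative of the form with
respect to its second variable. -/
lemma coeff_logForm_succ (f g : PowerSeries K) (P : Fin (N + 2) → ℤ[X]) :
    (logForm f g P).coeff N = f⁻¹ *
      linearForm ℤ (binaryMonomials N f g) fun i => (N + 1 - i : ℕ) * P i.castSucc := by
  rw [coeff_logForm, linearForm_apply, Fin.sum_univ_castSucc, Finset.mul_sum]
  have hlast : (binaryMonomials (N + 1) (C f * X) (C g * X + C f⁻¹) (Fin.last _)).coeff N = 0 := by
    rw [binaryMonomials, Fin.val_last, Nat.sub_self, pow_zero, mul_one, mul_pow, ← C_pow,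
      coeff_C_mul_X_pow, if_neg (by lia)]
  rw [hlast, mul_zero, add_zero]
  refine Finset.sum_congr rfl fun i _ => ?_
  obtain ⟨m, hm⟩ := Nat.exists_eq_add_of_le i.is_le
  have h := coeff_C_mul_X_pow_mul_C_mul_X_add_C_pow (f := f) (g := g) (e := f⁻¹) i (m + 1) m
  rw [← hm] at h
  rw [binaryMonomials, binaryMonomials, Fin.val_castSucc,
    show N + 1 - (i : ℕ) = m + 1 by lia, show N - (i : ℕ) = m by lia, h,
    Nat.add_sub_cancel_left, pow_one, Nat.choose_succ_self_right, map_mul, map_natCast]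
  ring

lemma linearForm_binaryMonomials_succ (P : Fin (N + 2) → ℤ[X]) :
    linearForm ℤ (binaryMonomials (N + 1) f g) P =
      linearForm ℤ (binaryMonomials N f g) (fun i => P i.castSucc) * g +
        algebraMap ℤ[X] (PowerSeries K) (P (Fin.last _)) * f ^ (N + 1) := by
  rw [linearForm_apply, linearForm_apply, Fin.sum_univ_castSucc, Finset.sum_mul]
  congr 1
  · refine Finset.sum_congr rfl fun i _ => ?_
    rw [binaryMonomials, binaryMonomials, Fin.val_castSucc, Nat.succ_sub i.is_le, pow_succ]
    ring
  · simp [binaryMonomials]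

variable (hf : psEuler K f = g) (hg : psEuler K g = -(PowerSeries.X * f))
  (h0 : PowerSeries.constantCoeff f ≠ 0)

include hf hg h0

lemma logDerivation_iterate_logForm (P : Fin (N + 1) → ℤ[X]) (n : ℕ) :
    (logDerivation (psEuler K) (f⁻¹ ^ 2))^[n] (logForm f g P) =
      logForm f g ((connection (polyEuler ℤ) (besselMatrix N X))^[n] P) := by
  have he := PowerSeries.mul_inv_cancel f h0
  have hsol := dualConnection_besselMatrix_binaryMonomials (N := N)
    ((logDerivation_C_mul_X hf he)) (logDerivation_C_mul_X_add_C hf hg he)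
  have hφ (a : ℤ[X]) : logDerivation (psEuler K) (f⁻¹ ^ 2)
      (C.comp (algebraMap ℤ[X] (PowerSeries K)) a) =
        C.comp (algebraMap ℤ[X] (PowerSeries K)) (polyEuler ℤ a) := by
    rw [RingHom.comp_apply, RingHom.comp_apply, logDerivation_C, psEuler_algebraMap]
  rw [logForm, derivation_iterate_dotProduct _ _ hsol, logForm,
    ← connection_iterate_map _ hφ P n, besselMatrix_map, RingHom.comp_apply,
    algebraMap_polynomial_X]

omit h0 in
lemma solvesEulerSystem_besselMatrix :
    SolvesEulerSystem (besselMatrix N (X : ℤ[X])) (binaryMonomials N f g) := by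
  rw [SolvesEulerSystem, besselMatrix_map, algebraMap_polynomial_X]
  exact dualConnection_besselMatrix_binaryMonomials hf hg

lemma eq_zero_of_linearForm_eq_zero_of_last_eq_zero {P : Fin (N + 2) → ℤ[X]}
    (hN : Function.Injective (linearForm ℤ (binaryMonomials N f g)))
    (hP : linearForm ℤ (binaryMonomials (N + 1) f g) P = 0) (hlast : P (Fin.last _) = 0) :
    P = 0 := by
  have hg0 : g ≠ 0 := by
    rintro rfl
    have hXf : PowerSeries.X * f = 0 := by rw [← neg_eq_zero, ← hg, map_zero]
    rw [(mul_eq_zero.1 hXf).resolve_left PowerSeries.X_ne_zero, map_zero] at h0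
    exact h0 rfl
  rw [linearForm_binaryMonomials_succ, hlast, map_zero, zero_mul, add_zero, mul_eq_zero,
    or_iff_left hg0] at hP
  have hinit := (injective_iff_map_eq_zero _).1 hN _ hP
  exact funext fun i => i.lastCases hlast (congrFun hinit)

lemma smul_connection_eq_smul_of_linearForm_eq_zero {P : Fin (N + 2) → ℤ[X]}
    (hN : Function.Injective (linearForm ℤ (binaryMonomials N f g)))
    (hP : linearForm ℤ (binaryMonomials (N + 1) f g) P = 0) :
    P (Fin.last _) • connection (polyEuler ℤ) (besselMatrix (N + 1) X) P =
      connection (polyEuler ℤ) (besselMatrix (N + 1) X) P (Fin.last _) • P := by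
  have hθP : linearForm ℤ (binaryMonomials (N + 1) f g)
      (connection (polyEuler ℤ) (besselMatrix (N + 1) X) P) = 0 := by
    have h := (solvesEulerSystem_besselMatrix hf hg).psEuler_iterate_linearForm P 1
    rwa [hP, Function.iterate_one, map_zero, eq_comm] at h
  refine sub_eq_zero.1 (eq_zero_of_linearForm_eq_zero_of_last_eq_zero hf hg h0 hN ?_ ?_)
  · rw [map_sub, map_smul, map_smul, hP, hθP, smul_zero, smul_zero, sub_zero]
  · simp only [Pi.sub_apply, Pi.smul_apply, smul_eq_mul]
    ring

end LogForm

section AlgebraicIndependence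

variable {K : Type*} [Field K] [CharZero K] {f g : PowerSeries K} {N : ℕ}

variable (hf : psEuler K f = g) (hg : psEuler K g = -(PowerSeries.X * f))
  (h0 : PowerSeries.constantCoeff f ≠ 0)

include hf hg h0

lemma linearForm_eq_zero_of_det_eq_zero {P : Fin (N + 1) → ℤ[X]}
    (hdet : (connectionMatrix (polyEuler ℤ) (besselMatrix N X) P).det = 0) :
    linearForm ℤ (binaryMonomials N f g) P = 0 := by
  let κ := f⁻¹ ^ 2
  have hκ : PowerSeries.constantCoeff κ ≠ 0 := by simpa [κ] using h0
  let T : Matrix (Fin (N + 1)) (Fin (N + 1)) (PowerSeries K) :=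
    of fun i j => (binaryMonomials N (C f * X) (C g * X + C f⁻¹) i).coeff j
  have hT : connectionMatrix (psEuler K) (logMatrix N κ) (fun j => (logForm f g P).coeff j) =
      (connectionMatrix (polyEuler ℤ) (besselMatrix N X) P).map
        (algebraMap ℤ[X] (PowerSeries K)) * T := by
    ext1 n j
    refine (congrFun (connection_logMatrix_iterate_coeff _ _ (natDegree_logForm_le f g P) n)
      j).trans ?_
    rw [logDerivation_iterate_logForm hf hg h0, coeff_logForm]
    rfl
  have hdet' : (connectionMatrix (psEuler K) (logMatrix N κ)
      fun j => (logForm f g P).coeff j).det = 0 := by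
    rw [hT, det_mul, ← RingHom.mapMatrix_apply, ← RingHom.map_det, hdet, map_zero, zero_mul]
  obtain ⟨c, hc, hmem⟩ := exists_single_last_mem_of_dualConnection_logMatrix_mem
    (fun n hn u a hu => wronskian_ne_natCast_mul_sq hu hκ hn)
    (fun u => dualConnection_mem_iterateAnnihilator) (iterateAnnihilator_ne_bot hdet')
  have hlast := eq_zero_of_single_mem_iterateAnnihilator hc hmem
  rwa [Fin.val_last, coeff_logForm_self] at hlast

/-- As `logForm f g P` is proportional to its derivative, so are its coefficients, which
contradicts the Wronskian condition for the two highest ones. -/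
lemma coeff_logForm_eq_zero_of_linearForm_eq_zero {P : Fin (N + 2) → ℤ[X]}
    (hN : Function.Injective (linearForm ℤ (binaryMonomials N f g)))
    (hP : linearForm ℤ (binaryMonomials (N + 1) f g) P = 0) (hlast : P (Fin.last _) ≠ 0) :
    (logForm f g P).coeff N = 0 := by
  cases N with
  | zero =>
    refine absurd (neg_eq_zero.1 (eq_zero_of_mul_psEuler_eq_mul hf hg (p := P 0) ?_ ?_)) hlast
    · rintro rfl
      exact h0 (map_zero _)
    · rw [linearForm_apply, Fin.sum_univ_two] at hP
      simp only [binaryMonomials, Fin.val_zero, Fin.val_one, pow_zero, one_mul, zero_add,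
        Nat.sub_zero, Nat.sub_self, pow_one, mul_one] at hP
      rw [map_neg]
      exact eq_neg_of_add_eq_zero_left hP |>.trans (neg_mul _ _).symm
  | succ N =>
    by_contra hne
    set q := logForm f g P
    have hqlast : q.coeff (N + 2) = 0 := (coeff_logForm_self f g P).trans hP
    have hθ (n : ℕ) : algebraMap ℤ[X] (PowerSeries K) (P (Fin.last _)) *
        (logDerivation (psEuler K) (f⁻¹ ^ 2) q).coeff n =
          algebraMap ℤ[X] (PowerSeries K)
            (connection (polyEuler ℤ) (besselMatrix (N + 2) X) P (Fin.last _)) * q.coeff n := by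
      have h := logDerivation_iterate_logForm hf hg h0 P 1
      simp only [Function.iterate_one] at h
      rw [h, ← coeff_logForm_smul, ← coeff_logForm_smul,
        smul_connection_eq_smul_of_linearForm_eq_zero hf hg h0 hN hP]
    have hθ₁ := hθ (N + 1)
    have hθ₀ := hθ N
    rw [coeff_logDerivation, hqlast, mul_zero, add_zero] at hθ₁
    rw [coeff_logDerivation] at hθ₀
    refine wronskian_ne_natCast_mul_sq (a := -q.coeff N) (κ := f⁻¹ ^ 2) (n := N + 1) hne
      (by simpa using h0) N.succ_ne_zero (mul_left_cancel₀
        ((map_ne_zero_iff _ (algebraMap_polynomial_injective Int.cast_injective)).2 hlast) ?_)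
    rw [map_neg]
    push_cast
    linear_combination q.coeff N * hθ₁ - q.coeff (N + 1) * hθ₀

theorem linearForm_binaryMonomials_injective :
    Function.Injective (linearForm ℤ (binaryMonomials N f g)) := by
  have hinj := algebraMap_polynomial_injective (R := ℤ) (S := K) Int.cast_injective
  have hf0 : f ≠ 0 := by
    rintro rfl
    exact h0 (map_zero _)
  refine (injective_iff_map_eq_zero _).2 fun P hP => ?_
  induction N with
  | zero =>
    rw [linearForm_apply, Fin.sum_univ_one] at hP
    ext1 i
    rw [Fin.eq_zero i]
    simpa [binaryMonomials, map_eq_zero_iff _ hinj] using hP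
  | succ N ih =>
    have hN := (injective_iff_map_eq_zero (linearForm ℤ (binaryMonomials N f g))).2 ih
    by_contra hP0
    have hlast : P (Fin.last _) ≠ 0 := fun h =>
      hP0 (eq_zero_of_linearForm_eq_zero_of_last_eq_zero hf hg h0 hN hP h)
    have hcoeff := coeff_logForm_eq_zero_of_linearForm_eq_zero hf hg h0 hN hP hlast
    rw [coeff_logForm_succ, mul_eq_zero, PowerSeries.inv_eq_zero, or_iff_right h0] at hcoeff
    have hinit (i : Fin (N + 1)) : P i.castSucc = 0 :=
      (mul_eq_zero.1 (congrFun (ih _ hcoeff) i)).resolve_left (Nat.cast_ne_zero.2 (by lia))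
    have hPlast : algebraMap ℤ[X] (PowerSeries K) (P (Fin.last _)) * f ^ (N + 1) = 0 := by
      simpa only [linearForm_binaryMonomials_succ, hinit, ← Pi.zero_def, map_zero, zero_mul,
        zero_add] using hP
    rw [mul_eq_zero, or_iff_left (pow_ne_zero _ hf0), map_eq_zero_iff _ hinj] at hPlast
    exact hlast hPlast

omit hf hg h0 in
lemma zeroEstimate_bessel {f g : PowerSeries ℚ} (hf : psEuler ℚ f = g)
    (hg : psEuler ℚ g = -(PowerSeries.X * f)) (h0 : PowerSeries.constantCoeff f ≠ 0) :
    ZeroEstimate (besselMatrix N X) (binaryMonomials N f g) 0 :=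
  fun _ _ _ hP0 _ hdet => hP0 ((injective_iff_map_eq_zero _).1
    (linearForm_binaryMonomials_injective hf hg h0) _
    (linearForm_eq_zero_of_det_eq_zero hf hg h0 hdet))

end AlgebraicIndependence

end BesselZeroEstimate

section ETypeProducts

variable {s B C : ℕ} {F G : PowerSeries ℚ}

lemma isEType_one (s : ℕ) : IsEType s 1 1 := by
  refine ⟨fun m => if m = 0 then 1 else 0, fun m => ?_⟩
  rw [PowerSeries.coeff_one]
  split_ifs with h <;> simp [h]

lemma IsEType.mono (hF : IsEType s B F) (hBC : B ≤ C) : IsEType s C F := by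
  obtain ⟨c, hc⟩ := hF
  exact ⟨c, fun m => ⟨(hc m).1, (hc m).2.trans (by gcongr)⟩⟩

open Finset in
lemma coeff_mul_eq_sum_choose_pow {c d : ℕ → ℤ}
    (hF : ∀ m, PowerSeries.coeff m F = c m / (m.factorial : ℚ) ^ s)
    (hG : ∀ m, PowerSeries.coeff m G = d m / (m.factorial : ℚ) ^ s) (m : ℕ) :
    PowerSeries.coeff m (F * G) =
      (∑ p ∈ antidiagonal m, (m.choose p.1 : ℤ) ^ s * (c p.1 * d p.2) : ℤ) /
        (m.factorial : ℚ) ^ s := by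
  rw [PowerSeries.coeff_mul, Int.cast_sum, sum_div]
  refine sum_congr rfl fun p hp => ?_
  rw [hF, hG, ← mem_antidiagonal.mp hp]
  push_cast
  rw [Nat.cast_add_choose ℚ]
  simp only [div_pow, mul_pow]
  field_simp

lemma two_pow_pow_mul_le {B C : ℤ} (hB : 0 ≤ B) (hC : 0 ≤ C) (s m : ℕ) :
    (m + 1 : ℕ) * ((2 ^ m) ^ s * (B ^ (m + 1) * C ^ (m + 1))) ≤
      (2 ^ (s + 1) * B * C) ^ (m + 1) := by
  have hm : ((m + 1 : ℕ) : ℤ) ≤ 2 ^ (m + 1) := by exact_mod_cast Nat.lt_two_pow_self.le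
  calc ((m + 1 : ℕ) : ℤ) * ((2 ^ m) ^ s * (B ^ (m + 1) * C ^ (m + 1)))
      ≤ 2 ^ (m + 1) * ((2 ^ (m + 1)) ^ s * (B ^ (m + 1) * C ^ (m + 1))) := by
        gcongr <;> norm_num
    _ = _ := by ring

open Finset in
lemma IsEType.mul (hB : 1 ≤ B) (hC : 1 ≤ C) (hF : IsEType s B F) (hG : IsEType s C G) :
    IsEType s (2 ^ (s + 1) * B * C) (F * G) := by
  choose c hc hcB using hF
  choose d hd hdC using hG
  refine ⟨_, fun m => ⟨coeff_mul_eq_sum_choose_pow hc hd m, ?_⟩⟩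
  have hterm : ∀ p ∈ antidiagonal m, |(m.choose p.1 : ℤ) ^ s * (c p.1 * d p.2)| ≤
      (2 ^ m) ^ s * ((B : ℤ) ^ (m + 1) * (C : ℤ) ^ (m + 1)) := by
    intro p hp
    have hpm := mem_antidiagonal.mp hp
    rw [abs_mul, abs_mul, abs_pow, Nat.abs_cast]
    gcongr
    · exact_mod_cast Nat.choose_le_two_pow m p.1
    · exact (hcB _).trans (pow_le_pow_right₀ (by exact_mod_cast hB) (by lia))
    · exact (hdC _).trans (pow_le_pow_right₀ (by exact_mod_cast hC) (by lia))
  refine (abs_sum_le_sum_abs _ _).trans ((sum_le_card_nsmul _ _ _ hterm).trans ?_)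
  rw [Nat.card_antidiagonal, nsmul_eq_mul]
  push_cast
  exact_mod_cast two_pow_pow_mul_le B.cast_nonneg C.cast_nonneg s m

lemma IsEType.pow (hB : 1 ≤ B) (hF : IsEType s B F) (n : ℕ) :
    IsEType s ((2 ^ (s + 1) * B) ^ n) (F ^ n) := by
  induction n with
  | zero => simpa using isEType_one s
  | succ n ih =>
    rw [pow_succ, pow_succ]
    exact (ih.mul (Nat.one_le_pow _ _ (by positivity)) hB hF).mono (by
      exact (by ring : 2 ^ (s + 1) * (2 ^ (s + 1) * B) ^ n * B = _).le)

lemma isEType_binaryMonomials (hB : 1 ≤ B) (hF : IsEType s B F) (hG : IsEType s B G) {N : ℕ}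
    (i : Fin (N + 1)) :
    IsEType s (2 ^ (s + 1) * (2 ^ (s + 1) * B) ^ N * (2 ^ (s + 1) * B) ^ N)
      (binaryMonomials N F G i) := by
  have hpos : 0 < 2 ^ (s + 1) * B := by positivity
  refine ((hF.pow hB i).mul (Nat.one_le_pow _ _ hpos) (Nat.one_le_pow _ _ hpos)
    (hG.pow hB (N - i))).mono ?_
  gcongr <;> lia

end ETypeProducts

section BesselSeries

/-- The power series `∑ (-1) ^ m X ^ m / (m!) ^ 2`, whose value at `r ^ 2 / 4` is `J₀(r)`. -/
noncomputable def besselSeries : PowerSeries ℚ :=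
  PowerSeries.mk fun m => (-1) ^ m / (m.factorial : ℚ) ^ 2

lemma constantCoeff_besselSeries : PowerSeries.constantCoeff besselSeries = 1 := by
  rw [← PowerSeries.coeff_zero_eq_constantCoeff_apply, besselSeries]
  simp

lemma psEuler_psEuler_besselSeries :
    psEuler ℚ (psEuler ℚ besselSeries) = -(PowerSeries.X * besselSeries) := by
  ext m
  rw [coeff_psEuler, coeff_psEuler, map_neg, besselSeries]
  cases m with
  | zero => simp
  | succ m =>
    rw [PowerSeries.coeff_succ_X_mul, PowerSeries.coeff_mk, PowerSeries.coeff_mk,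
      Nat.factorial_succ]
    push_cast
    field_simp
    ring

lemma isEType_besselSeries : IsEType 2 2 besselSeries := by
  refine ⟨fun m => (-1) ^ m, fun m => ⟨by simp [besselSeries], ?_⟩⟩
  rw [abs_pow, abs_neg, abs_one, one_pow]
  exact one_le_pow₀ (by norm_num)

lemma isEType_psEuler_besselSeries : IsEType 2 2 (psEuler ℚ besselSeries) := by
  refine ⟨fun m => m * (-1) ^ m, fun m => ⟨?_, ?_⟩⟩
  · rw [coeff_psEuler, besselSeries, PowerSeries.coeff_mk]
    push_cast
    ring
  · rw [abs_mul, abs_pow, abs_neg, abs_one, one_pow, mul_one, Nat.abs_cast]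
    exact_mod_cast Nat.lt_two_pow_self.le.trans (Nat.pow_le_pow_right (by norm_num) m.le_succ)

lemma isSiegelSystem_bessel (N : ℕ) :
    IsSiegelSystem 2 (besselMatrix N Polynomial.X)
      (binaryMonomials N besselSeries (psEuler ℚ besselSeries)) where
  natDegree_le_one := natDegree_besselMatrix_le
  solvesEulerSystem := solvesEulerSystem_besselMatrix rfl psEuler_psEuler_besselSeries
  exists_isUnit := ⟨Fin.last N, by
    simp [binaryMonomials, (PowerSeries.isUnit_iff_constantCoeff.mpr
      (constantCoeff_besselSeries ▸ isUnit_one)).pow N]⟩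
  exists_isEType := ⟨_, Nat.one_le_iff_ne_zero.mpr (by positivity),
    isEType_binaryMonomials (by norm_num) isEType_besselSeries isEType_psEuler_besselSeries⟩
  exists_zeroEstimate := ⟨0, zeroEstimate_bessel rfl psEuler_psEuler_besselSeries
    (by simp [constantCoeff_besselSeries])⟩

/-- Siegel's theorem on the Bessel function `J₀`. -/
theorem eq_zero_of_hasValueAt_besselSeries {z x y c : ℂ} (hz : IsAlgebraic ℚ z) (hz0 : z ≠ 0)
    (hx : IsAlgebraic ℚ x) (hy : IsAlgebraic ℚ y) (hxy : x ≠ 0 ∨ y ≠ 0)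
    (hf : HasValueAt z besselSeries (c * x)) (hg : HasValueAt z (psEuler ℚ besselSeries) (c * y)) :
    c = 0 := by
  let K := IntermediateField.adjoin ℚ {z, x, y}
  have : FiniteDimensional ℚ K := IntermediateField.finiteDimensional_adjoin fun t ht => by
    rcases ht with rfl | rfl | rfl
    exacts [hz.isIntegral, hx.isIntegral, hy.isIntegral]
  have : NumberField K := ⟨⟩
  let ζ : K := ⟨z, IntermediateField.subset_adjoin ℚ _ (by simp)⟩
  let ξ : K := ⟨x, IntermediateField.subset_adjoin ℚ _ (by simp)⟩
  let η : K := ⟨y, IntermediateField.subset_adjoin ℚ _ (by simp)⟩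
  let N := Module.finrank ℚ K * 2 + 1
  have hv : binaryMonomials N ξ η ≠ 0 := fun h => by
    rcases hxy with h' | h'
    · have hξ := congrFun h (Fin.last N)
      simp only [binaryMonomials, Fin.val_last, Nat.sub_self, pow_zero, mul_one,
        Pi.zero_apply] at hξ
      exact h' (congrArg Subtype.val (eq_zero_of_pow_eq_zero hξ))
    · have hη := congrFun h 0
      simp only [binaryMonomials, Fin.val_zero, Nat.sub_zero, pow_zero, one_mul,
        Pi.zero_apply] at hη
      exact h' (congrArg Subtype.val (eq_zero_of_pow_eq_zero hη))
  refine eq_zero_of_pow_eq_zero ((isSiegelSystem_bessel N).eq_zero_of_hasValueAt (γ := c ^ N)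
    K.val.toRingHom (by lia) (ζ := ζ) (fun h => hz0 (congrArg Subtype.val h)) hv fun i => ?_)
  have hval : c ^ N * K.val.toRingHom (binaryMonomials N ξ η i) =
      (c * x) ^ (i : ℕ) * (c * y) ^ (N - i) := by
    have hpow : c ^ N = c ^ (i : ℕ) * c ^ (N - i) := by
      rw [← pow_add, Nat.add_sub_cancel' (Nat.lt_succ_iff.mp i.2)]
    rw [binaryMonomials, map_mul, map_pow, map_pow, hpow]
    change _ * (x ^ (i : ℕ) * y ^ (N - i)) = _
    ring
  rw [hval]
  exact (hf.pow i).mul (hg.pow (N - i))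

end BesselSeries

section ReducedBessel

/-- The coefficient of `z ^ k` in the power series of `reducedBessel ν z`. -/
noncomputable def reducedBesselCoeff (ν : ℝ) (k : ℕ) : ℝ :=
  (-1) ^ k / (k.factorial * Real.Gamma ((k : ℝ) + ν + 1))

/-- The entire function of `z` given by `z ^ (-ν / 2) * J_ν (2 √z)` for `0 < z`. -/
noncomputable def reducedBessel (ν z : ℝ) : ℝ :=
  ∑' k : ℕ, reducedBesselCoeff ν k * z ^ k

variable {ν : ℝ}

lemma Gamma_natCast_add_pos (hν : -1 < ν) (k : ℕ) : 0 < Real.Gamma ((k : ℝ) + ν + 1) :=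
  Real.Gamma_pos_of_pos (by linarith [k.cast_nonneg (α := ℝ)])

lemma Gamma_natCast_succ_add (hν : -1 < ν) (k : ℕ) :
    Real.Gamma (((k + 1 : ℕ) : ℝ) + ν + 1) = ((k : ℝ) + ν + 1) * Real.Gamma ((k : ℝ) + ν + 1) := by
  rw [← Real.Gamma_add_one (by linarith [k.cast_nonneg (α := ℝ)])]
  push_cast
  ring_nf

lemma Gamma_add_two_le (hν : -1 < ν) (k : ℕ) :
    Real.Gamma (ν + 2) ≤ Real.Gamma (((k + 1 : ℕ) : ℝ) + ν + 1) := by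
  induction k with
  | zero => exact le_of_eq (by push_cast; ring_nf)
  | succ k ih =>
    refine ih.trans ?_
    rw [Gamma_natCast_succ_add hν (k + 1)]
    refine le_mul_of_one_le_left (Gamma_natCast_add_pos hν _).le ?_
    push_cast
    linarith [k.cast_nonneg (α := ℝ)]

lemma abs_reducedBesselCoeff_succ_le (hν : -1 < ν) (k : ℕ) :
    |reducedBesselCoeff ν (k + 1)| ≤ (Real.Gamma (ν + 2))⁻¹ * ((k + 1).factorial : ℝ)⁻¹ := by
  rw [reducedBesselCoeff, abs_div, abs_pow, abs_neg, abs_one, one_pow, abs_mul, Nat.abs_cast,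
    abs_of_pos (Gamma_natCast_add_pos hν _), one_div, mul_inv, mul_comm]
  gcongr
  · exact Real.Gamma_pos_of_pos (by linarith)
  · exact Gamma_add_two_le hν k

lemma summable_reducedBessel (hν : -1 < ν) (z : ℝ) :
    Summable fun k => reducedBesselCoeff ν k * z ^ k := by
  rw [← summable_nat_add_iff 1]
  refine .of_norm_bounded (((summable_nat_add_iff 1).2
    (Real.summable_pow_div_factorial |z|)).mul_left (Real.Gamma (ν + 2))⁻¹) fun k => ?_
  rw [Real.norm_eq_abs, abs_mul, abs_pow]
  calc _ ≤ (Real.Gamma (ν + 2))⁻¹ * ((k + 1).factorial : ℝ)⁻¹ * |z| ^ (k + 1) := by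
        gcongr; exact abs_reducedBesselCoeff_succ_le hν k
    _ = _ := by ring

lemma reducedBesselCoeff_succ_mul (ν : ℝ) (k : ℕ) :
    reducedBesselCoeff ν (k + 1) * (k + 1 : ℕ) = -reducedBesselCoeff (ν + 1) k := by
  have harg : ((k + 1 : ℕ) : ℝ) + ν + 1 = (k : ℝ) + (ν + 1) + 1 := by push_cast; ring
  rw [reducedBesselCoeff, reducedBesselCoeff, harg, Nat.factorial_succ, Nat.cast_mul, mul_assoc,
    div_mul_eq_mul_div, mul_comm ((-1 : ℝ) ^ (k + 1)),
    mul_div_mul_left _ _ (Nat.cast_ne_zero.2 k.succ_ne_zero), pow_succ]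
  ring

lemma reducedBesselCoeff_sub_one (hν : 0 < ν) (k : ℕ) :
    reducedBesselCoeff (ν - 1) k = (ν + k) * reducedBesselCoeff ν k := by
  have hpos : 0 < (k : ℝ) + ν := by positivity
  have hΓ := (Real.Gamma_pos_of_pos hpos).ne'
  rw [reducedBesselCoeff, reducedBesselCoeff, add_sub_assoc', sub_add_cancel,
    Real.Gamma_add_one hpos.ne']
  field_simp
  ring

lemma hasSum_deriv_reducedBessel (hν : -1 < ν) (z : ℝ) :
    HasSum (fun k : ℕ => reducedBesselCoeff ν k * ((k : ℝ) * z ^ (k - 1)))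
      (-reducedBessel (ν + 1) z) := by
  rw [← hasSum_nat_add_iff' 1]
  simp only [Finset.range_one, Finset.sum_singleton, Nat.cast_zero, zero_mul, mul_zero, sub_zero,
    Nat.add_sub_cancel]
  refine (summable_reducedBessel (by linarith : -1 < ν + 1) z).hasSum.neg.congr_fun fun k => ?_
  rw [← mul_assoc, reducedBesselCoeff_succ_mul, neg_mul]

lemma hasSum_natCast_mul_reducedBessel (hν : -1 < ν) (z : ℝ) :
    HasSum (fun k : ℕ => (k : ℝ) * (reducedBesselCoeff ν k * z ^ k))
      (-z * reducedBessel (ν + 1) z) := by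
  have h := (hasSum_deriv_reducedBessel hν z).mul_left z
  rw [mul_neg, ← neg_mul] at h
  refine h.congr_fun fun k => ?_
  cases k with
  | zero => simp
  | succ k => rw [Nat.add_sub_cancel, pow_succ]; ring

lemma hasDerivAt_reducedBessel (hν : -1 < ν) (z : ℝ) :
    HasDerivAt (reducedBessel ν) (-reducedBessel (ν + 1) z) z := by
  rw [← (hasSum_deriv_reducedBessel hν z).tsum_eq]
  have hu : Summable fun k : ℕ =>
      (Real.Gamma (ν + 2))⁻¹ * ((k.factorial : ℝ)⁻¹ * ((k : ℝ) * (|z| + 1) ^ (k - 1))) := by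
    rw [← summable_nat_add_iff 1]
    refine ((Real.summable_pow_div_factorial (|z| + 1)).mul_left
      (Real.Gamma (ν + 2))⁻¹).congr fun k => ?_
    rw [Nat.add_sub_cancel, Nat.factorial_succ]
    push_cast
    field_simp
  refine hasDerivAt_tsum_of_isPreconnected hu Metric.isOpen_ball
    (convex_ball z 1).isPreconnected (g := fun k y => reducedBesselCoeff ν k * y ^ k)
    (fun k y _ => (hasDerivAt_pow k y).const_mul _) (fun k y hy => ?_)
    (Metric.mem_ball_self one_pos) (summable_reducedBessel hν z) (Metric.mem_ball_self one_pos)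
  cases k with
  | zero => simp
  | succ k =>
    have hy' : |y| ≤ |z| + 1 := by
      rw [Metric.mem_ball, Real.dist_eq] at hy
      linarith [abs_sub_abs_le_abs_sub y z]
    rw [Real.norm_eq_abs, abs_mul, abs_mul, abs_pow, Nat.abs_cast, ← mul_assoc _ _ (_ * _)]
    exact mul_le_mul (abs_reducedBesselCoeff_succ_le hν k) (by gcongr) (by positivity)
      ((abs_nonneg _).trans (abs_reducedBesselCoeff_succ_le hν k))

lemma reducedBessel_sub_one (hν : 0 < ν) (z : ℝ) :
    reducedBessel (ν - 1) z = ν * reducedBessel ν z - z * reducedBessel (ν + 1) z := by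
  have hν' : -1 < ν := by linarith
  have hsum := ((summable_reducedBessel hν' z).hasSum.mul_left ν).add
    (hasSum_natCast_mul_reducedBessel hν' z)
  rw [sub_eq_add_neg _ (z * _), ← neg_mul]
  refine Eq.trans (tsum_congr fun k => ?_) hsum.tsum_eq
  rw [reducedBesselCoeff_sub_one hν]
  ring

lemma mul_reducedBessel_add_two (hν : -1 < ν) (z : ℝ) :
    z * reducedBessel (ν + 2) z = (ν + 1) * reducedBessel (ν + 1) z - reducedBessel ν z := by
  have h := reducedBessel_sub_one (by linarith : 0 < ν + 1) z
  rw [add_sub_cancel_right, add_assoc, one_add_one_eq_two] at h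
  linarith

lemma abs_reducedBessel_sub_le (hν : -1 < ν) (z : ℝ) :
    |reducedBessel ν z - (Real.Gamma (ν + 1))⁻¹| ≤
      (Real.Gamma (ν + 2))⁻¹ * (Real.exp |z| - 1) := by
  have htail : reducedBessel ν z - (Real.Gamma (ν + 1))⁻¹ =
      ∑' k, reducedBesselCoeff ν (k + 1) * z ^ (k + 1) := by
    rw [reducedBessel, (summable_reducedBessel hν z).tsum_eq_zero_add, reducedBesselCoeff]
    simp
  have hexp : HasSum (fun k : ℕ => |z| ^ (k + 1) / (k + 1).factorial) (Real.exp |z| - 1) := by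
    simpa [← Real.exp_eq_exp_ℝ] using
      (hasSum_nat_add_iff' 1).2 (NormedSpace.expSeries_div_hasSum_exp |z|)
  rw [htail, ← Real.norm_eq_abs]
  refine tsum_of_norm_bounded (hexp.mul_left _) fun k => ?_
  rw [Real.norm_eq_abs, abs_mul, abs_pow, div_eq_inv_mul, ← mul_assoc]
  gcongr
  exact abs_reducedBesselCoeff_succ_le hν k

lemma reducedBessel_ne_zero_of_exp_lt {z : ℝ} (h : Real.exp |z| < ν + 1) :
    reducedBessel ν z ≠ 0 := by
  intro hzero
  have hν : 0 < ν + 1 := (Real.exp_pos _).trans h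
  have hle := abs_reducedBessel_sub_le (by linarith : -1 < ν) z
  have hΓ : Real.Gamma (ν + 2) = (ν + 1) * Real.Gamma (ν + 1) := by
    rw [← Real.Gamma_add_one hν.ne']
    ring_nf
  rw [hzero, zero_sub, abs_neg, abs_inv, abs_of_pos (Real.Gamma_pos_of_pos hν), hΓ, mul_inv,
    mul_right_comm] at hle
  have hone : 1 ≤ (ν + 1)⁻¹ * (Real.exp |z| - 1) :=
    le_of_mul_le_mul_right (by rwa [one_mul]) (inv_pos.2 (Real.Gamma_pos_of_pos hν))
  rw [inv_mul_eq_div, one_le_div hν] at hone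
  linarith

/-- A common zero would propagate by the recurrence to all orders `ν + n`. -/
lemma reducedBessel_ne_zero_or {z : ℝ} (hν : -1 < ν) (hz : z ≠ 0) :
    reducedBessel ν z ≠ 0 ∨ reducedBessel (ν + 1) z ≠ 0 := by
  by_contra! h
  have hall (n : ℕ) : reducedBessel (ν + n) z = 0 ∧ reducedBessel (ν + n + 1) z = 0 := by
    induction n with
    | zero => simpa using h
    | succ n ih =>
      have hrec := mul_reducedBessel_add_two (by linarith [n.cast_nonneg (α := ℝ)] : -1 < ν + n) z
      rw [ih.1, ih.2, mul_zero, sub_zero] at hrec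
      rw [Nat.cast_add_one, ← add_assoc, add_assoc _ 1 1, one_add_one_eq_two]
      exact ⟨ih.2, (mul_eq_zero.1 hrec).resolve_left hz⟩
  obtain ⟨n, hn⟩ := exists_nat_gt (Real.exp |z|)
  exact reducedBessel_ne_zero_of_exp_lt (by linarith) (hall n).1

end ReducedBessel

section LommelPolynomials

open Polynomial

/-- Polynomials `s n`, of Lommel's type, such that `z ^ n * reducedBessel (q + n) z` is
`s n (z) * reducedBessel q z` if `a * reducedBessel q z = 2 * z * reducedBessel (q + 1) z`. -/
noncomputable def lommelPoly (q a : ℚ) : ℕ → ℚ[X]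
  | 0 => 1
  | 1 => C (a / 2)
  | n + 2 => C (q + n + 1) * lommelPoly q a (n + 1) - X * lommelPoly q a n

lemma pow_mul_reducedBessel_add {q a : ℚ} {z : ℝ} (hq : -1 < q)
    (h : a * reducedBessel q z = 2 * z * reducedBessel (q + 1) z) (n : ℕ) :
    z ^ n * reducedBessel (q + n) z = aeval z (lommelPoly q a n) * reducedBessel q z := by
  have hq' : (-1 : ℝ) < q := by exact_mod_cast hq
  induction n using Nat.twoStepInduction with
  | zero => simp [lommelPoly]
  | one =>
    simp only [lommelPoly, aeval_C, eq_ratCast, Rat.cast_div, Rat.cast_ofNat, Nat.cast_one, pow_one]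
    linarith
  | more n ih1 ih2 =>
    have hrec := mul_reducedBessel_add_two
      (by linarith [n.cast_nonneg (α := ℝ)] : (-1 : ℝ) < q + n) z
    rw [Nat.cast_add_one, ← add_assoc] at ih2
    rw [Nat.cast_add, Nat.cast_ofNat, ← add_assoc]
    simp only [lommelPoly, map_sub, map_mul, aeval_C, aeval_X, eq_ratCast, Rat.cast_add,
      Rat.cast_natCast, Rat.cast_one]
    linear_combination z ^ (n + 1) * hrec + ((q : ℝ) + n + 1) * ih2 - z * ih1

lemma coeff_zero_lommelPoly_add_two (q a : ℚ) (n : ℕ) :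
    (lommelPoly q a (n + 2)).coeff 0 = (q + n + 1) * (lommelPoly q a (n + 1)).coeff 0 := by
  rw [lommelPoly, coeff_sub, coeff_C_mul, mul_coeff_zero X, coeff_X_zero, zero_mul, sub_zero]

lemma coeff_one_lommelPoly_add_two (q a : ℚ) (n : ℕ) :
    (lommelPoly q a (n + 2)).coeff 1 =
      (q + n + 1) * (lommelPoly q a (n + 1)).coeff 1 - (lommelPoly q a n).coeff 0 := by
  rw [lommelPoly, coeff_sub, coeff_C_mul, ← zero_add 1, coeff_X_mul]

lemma coeff_zero_lommelPoly_pos {q a : ℚ} (hq : 0 ≤ q) (ha : 0 < a) (n : ℕ) :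
    0 < (lommelPoly q a (n + 1)).coeff 0 := by
  induction n with
  | zero => rw [lommelPoly, coeff_C_zero]; positivity
  | succ n ih => rw [coeff_zero_lommelPoly_add_two]; positivity

lemma coeff_zero_lommelPoly_zero (q : ℚ) (n : ℕ) : (lommelPoly q 0 (n + 1)).coeff 0 = 0 := by
  induction n with
  | zero => simp [lommelPoly]
  | succ n ih => rw [coeff_zero_lommelPoly_add_two, ih, mul_zero]

lemma coeff_one_lommelPoly_zero_neg {q : ℚ} (hq : 0 ≤ q) (n : ℕ) :
    (lommelPoly q 0 (n + 2)).coeff 1 < 0 := by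
  induction n with
  | zero => simp [lommelPoly]
  | succ n ih =>
    rw [coeff_one_lommelPoly_add_two, coeff_zero_lommelPoly_zero, sub_zero]
    exact mul_neg_of_pos_of_neg (by positivity) ih

/-- For `a ≠ 0` the constant coefficient does not vanish; for `a = 0` it does, and the linear one
does not. -/
lemma two_mul_lommelPoly_sub_ne_zero {q a : ℚ} (ha : 0 ≤ a) (hq : a ≤ q) {p : ℕ} (hp : p ≠ 0) :
    C 2 * lommelPoly q a (p + 1) - C (a + p) * lommelPoly q a p ≠ 0 := by
  obtain ⟨n, rfl⟩ := Nat.exists_eq_succ_of_ne_zero hp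
  intro h
  rcases ha.lt_or_eq with ha' | rfl
  · have h0 := congrArg (coeff · 0) h
    simp only [coeff_sub, coeff_C_mul, coeff_zero_lommelPoly_add_two, coeff_zero] at h0
    have hpos := coeff_zero_lommelPoly_pos (ha.trans hq) ha' n
    have hfac : 0 < 2 * (q + n + 1) - (a + (n + 1 : ℕ)) := by
      push_cast
      linarith [n.cast_nonneg (α := ℚ)]
    linarith [mul_pos hfac hpos]
  · have h1 := congrArg (coeff · 1) h
    simp only [coeff_sub, coeff_C_mul, coeff_zero] at h1
    cases n with
    | zero => simp [lommelPoly] at h1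
    | succ n =>
      rw [coeff_one_lommelPoly_add_two _ _ (n + 1), coeff_zero_lommelPoly_zero] at h1
      have hneg := coeff_one_lommelPoly_zero_neg hq n
      have hfac : 0 < 2 * (q + (n + 1 : ℕ) + 1) - (0 + (n + 1 + 1 : ℕ)) := by
        push_cast
        linarith [n.cast_nonneg (α := ℚ)]
      linarith [mul_neg_of_pos_of_neg hfac hneg]

lemma isAlgebraic_of_reducedBessel_eq {q a : ℚ} {z : ℝ} {p : ℕ} (ha : 0 ≤ a) (hq : a ≤ q)
    (hp : p ≠ 0) (h0 : reducedBessel q z ≠ 0)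
    (h1 : a * reducedBessel q z = 2 * z * reducedBessel (q + 1) z)
    (h2 : (a + p) * reducedBessel (q + p) z = 2 * z * reducedBessel (q + p + 1) z) :
    IsAlgebraic ℚ z := by
  refine ⟨_, two_mul_lommelPoly_sub_ne_zero ha hq hp, mul_right_cancel₀ h0 ?_⟩
  have hp0 := pow_mul_reducedBessel_add (by linarith) h1 p
  have hp1 := pow_mul_reducedBessel_add (by linarith) h1 (p + 1)
  rw [Nat.cast_add_one, ← add_assoc] at hp1
  simp only [map_sub, map_mul, aeval_C, eq_ratCast, Rat.cast_add, Rat.cast_natCast,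
    Rat.cast_ofNat, zero_mul]
  linear_combination (-2) * hp1 + ((a : ℝ) + p) * hp0 - z ^ p * h2

end LommelPolynomials

section AlgebraicRatios

/-- The values at `z` of the reduced Bessel functions of orders `ν` and `ν + 1` are proportional
to a pair of algebraic numbers, not both zero. -/
def BesselRatioIsAlgebraic (ν z : ℝ) : Prop :=
  ∃ c x y : ℝ, c ≠ 0 ∧ IsAlgebraic ℚ x ∧ IsAlgebraic ℚ y ∧ (x ≠ 0 ∨ y ≠ 0) ∧
    reducedBessel ν z = c * x ∧ reducedBessel (ν + 1) z = c * y

namespace BesselRatioIsAlgebraic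

lemma sub_one {q : ℚ} {z : ℝ} (hq : 0 < q) (hz : IsAlgebraic ℚ z) (hz0 : z ≠ 0)
    (h : BesselRatioIsAlgebraic q z) : BesselRatioIsAlgebraic (q - 1) z := by
  obtain ⟨c, x, y, hc, hx, hy, hxy, h0, h1⟩ := h
  refine ⟨c, q * x - z * y, x, hc, ((isAlgebraic_algebraMap q).mul hx).sub (hz.mul hy), hx, ?_, ?_,
    by rw [sub_add_cancel, h0]⟩
  · by_contra! h
    obtain ⟨h, rfl⟩ := h
    rw [mul_zero, zero_sub, neg_eq_zero, mul_eq_zero] at h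
    exact hxy.elim (· rfl) (· (h.resolve_left hz0))
  · rw [reducedBessel_sub_one (by exact_mod_cast hq), h0, h1]
    ring

lemma of_add_natCast {q : ℚ} {z : ℝ} (hq : -1 < q) (hz : IsAlgebraic ℚ z) (hz0 : z ≠ 0) (n : ℕ)
    (h : BesselRatioIsAlgebraic (q + n) z) : BesselRatioIsAlgebraic q z := by
  induction n with
  | zero => simpa using h
  | succ n ih =>
    have hpos : 0 < q + (n + 1 : ℕ) := by push_cast; linarith [n.cast_nonneg (α := ℚ)]
    have hpred := sub_one hpos hz hz0 (by exact_mod_cast h)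
    rw [Rat.cast_add, Rat.cast_natCast, Nat.cast_add_one, ← add_assoc,
      add_sub_cancel_right] at hpred
    exact ih hpred

end BesselRatioIsAlgebraic

end AlgebraicRatios

section BaseOrders

lemma hasValueAt_ofReal {F : PowerSeries ℚ} {z w : ℝ}
    (h : HasSum (fun m => ((PowerSeries.coeff m F : ℚ) : ℝ) * z ^ m) w) : HasValueAt z F w := by
  have hc : HasSum (fun m => ((PowerSeries.coeff m F : ℚ) : ℂ) * (z : ℂ) ^ m) w := by
    exact_mod_cast Complex.hasSum_ofReal.mpr h
  exact ⟨hc.summable.norm, hc⟩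

lemma coeff_besselSeries_eq_reducedBesselCoeff (m : ℕ) :
    ((PowerSeries.coeff m besselSeries : ℚ) : ℝ) = reducedBesselCoeff 0 m := by
  rw [besselSeries, PowerSeries.coeff_mk, reducedBesselCoeff, add_zero,
    Real.Gamma_nat_eq_factorial]
  push_cast
  ring

lemma hasValueAt_besselSeries (z : ℝ) : HasValueAt z besselSeries (reducedBessel 0 z : ℝ) := by
  refine hasValueAt_ofReal ?_
  simp only [coeff_besselSeries_eq_reducedBesselCoeff]
  exact (summable_reducedBessel (by norm_num) z).hasSum

lemma hasValueAt_psEuler_besselSeries (z : ℝ) :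
    HasValueAt z (psEuler ℚ besselSeries) (-z * reducedBessel (0 + 1) z : ℝ) := by
  refine hasValueAt_ofReal ?_
  simp only [coeff_psEuler, Rat.cast_mul, Rat.cast_natCast,
    coeff_besselSeries_eq_reducedBesselCoeff, mul_assoc]
  exact hasSum_natCast_mul_reducedBessel (by norm_num) z

lemma isAlgebraic_ofReal {x : ℝ} (hx : IsAlgebraic ℚ x) : IsAlgebraic ℚ (x : ℂ) :=
  hx.algebraMap (A := ℂ)

theorem not_besselRatioIsAlgebraic_zero {z : ℝ} (hz : IsAlgebraic ℚ z) (hz0 : z ≠ 0) :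
    ¬ BesselRatioIsAlgebraic 0 z := by
  rintro ⟨c, x, y, hc, hx, hy, hxy, h0, h1⟩
  have hf := hasValueAt_besselSeries z
  have hg := hasValueAt_psEuler_besselSeries z
  rw [h0, Complex.ofReal_mul] at hf
  rw [h1, mul_left_comm, Complex.ofReal_mul] at hg
  refine hc (Complex.ofReal_eq_zero.1 (eq_zero_of_hasValueAt_besselSeries (isAlgebraic_ofReal hz)
    (Complex.ofReal_ne_zero.2 hz0) (isAlgebraic_ofReal hx) (isAlgebraic_ofReal (hz.neg.mul hy))
    (hxy.imp Complex.ofReal_ne_zero.2 fun h => ?_) hf hg))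
  exact Complex.ofReal_ne_zero.2 (mul_ne_zero (neg_ne_zero.2 hz0) h)

lemma factorial_mul_Gamma_neg_half (k : ℕ) :
    (k.factorial : ℝ) * Real.Gamma (k + -(1 / 2) + 1) * 4 ^ k =
      (2 * k).factorial * √Real.pi := by
  induction k with
  | zero =>
    rw [Nat.cast_zero, show (0 : ℝ) + -(1 / 2) + 1 = 1 / 2 by norm_num, Real.Gamma_one_half_eq]
    simp
  | succ k ih =>
    rw [Gamma_natCast_succ_add (by norm_num), mul_add_one, Nat.factorial_succ, Nat.factorial_succ,
      Nat.factorial_succ]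
    push_cast
    linear_combination (4 * ((k : ℝ) + 1) * (k + 1 / 2)) * ih

lemma sqrt_pi_mul_reducedBessel_neg_half (r : ℝ) :
    √Real.pi * reducedBessel (-(1 / 2)) (r ^ 2 / 4) = Real.cos r := by
  rw [reducedBessel, ← tsum_mul_left, ← (Real.hasSum_cos r).tsum_eq]
  refine tsum_congr fun k => ?_
  have hΓ := (Gamma_natCast_add_pos (by norm_num : (-1 : ℝ) < -(1 / 2)) k).ne'
  have h := factorial_mul_Gamma_neg_half k
  rw [reducedBesselCoeff, div_pow, ← pow_mul]
  generalize Real.Gamma (k + -(1 / 2) + 1) = G at hΓ h ⊢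
  field_simp
  linear_combination -r ^ (2 * k) * h

lemma hasDerivAt_reducedBessel_sq_div_four {ν : ℝ} (hν : -1 < ν) (r : ℝ) :
    HasDerivAt (fun s => reducedBessel ν (s ^ 2 / 4))
      (-reducedBessel (ν + 1) (r ^ 2 / 4) * (r / 2)) r := by
  have hsq : HasDerivAt (fun s : ℝ => s ^ 2 / 4) (r / 2) r := by
    have h := (hasDerivAt_pow 2 r).div_const 4
    rwa [show ((2 : ℕ) : ℝ) * r ^ (2 - 1) / 4 = r / 2 by norm_num; ring] at h
  exact HasDerivAt.comp (h₂ := reducedBessel ν) (h := fun s => s ^ 2 / 4) r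
    (hasDerivAt_reducedBessel hν _) hsq

lemma sqrt_pi_mul_reducedBessel_half (r : ℝ) :
    √Real.pi * reducedBessel (-(1 / 2) + 1) (r ^ 2 / 4) * r = 2 * Real.sin r := by
  have h := (hasDerivAt_reducedBessel_sq_div_four (by norm_num : (-1 : ℝ) < -(1 / 2)) r).const_mul
    √Real.pi
  simp only [sqrt_pi_mul_reducedBessel_neg_half] at h
  linear_combination (-2) * h.unique (Real.hasDerivAt_cos r)

lemma cos_ne_mul_or_sin_ne_mul {r c x y : ℝ} (hr : IsAlgebraic ℚ r) (hr0 : r ≠ 0)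
    (hx : IsAlgebraic ℚ x) (hy : IsAlgebraic ℚ y) :
    Real.cos r ≠ c * x ∨ Real.sin r ≠ c * y := by
  by_contra! ⟨hcos, hsin⟩
  have hsq : c ^ 2 = (x ^ 2 + y ^ 2)⁻¹ := by
    refine eq_inv_of_mul_eq_one_left ?_
    rw [← Real.cos_sq_add_sin_sq r, hcos, hsin]
    ring
  have hc : IsAlgebraic ℚ c := .of_pow two_pos (hsq ▸ ((hx.pow 2).add (hy.pow 2)).inv)
  have hI : IsAlgebraic ℚ Complex.I := .of_pow two_pos (Complex.I_sq ▸ isAlgebraic_one.neg)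
  refine not_isAlgebraic_exp ((isAlgebraic_ofReal hr).mul hI)
    (mul_ne_zero (Complex.ofReal_ne_zero.2 hr0) Complex.I_ne_zero) ?_
  rw [Complex.exp_mul_I, ← Complex.ofReal_cos, ← Complex.ofReal_sin, hcos, hsin]
  exact (isAlgebraic_ofReal (hc.mul hx)).add ((isAlgebraic_ofReal (hc.mul hy)).mul hI)

theorem not_besselRatioIsAlgebraic_neg_half {r : ℝ} (hr : IsAlgebraic ℚ r) (hr0 : r ≠ 0) :
    ¬ BesselRatioIsAlgebraic (-(1 / 2)) (r ^ 2 / 4) := by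
  rintro ⟨c, x, y, -, hx, hy, -, h0, h1⟩
  have hcos := sqrt_pi_mul_reducedBessel_neg_half r
  have hsin := sqrt_pi_mul_reducedBessel_half r
  rw [h0] at hcos
  rw [h1] at hsin
  refine (cos_ne_mul_or_sin_ne_mul (c := √Real.pi * c) hr hr0 hx
    ((hy.mul hr).mul (isAlgebraic_algebraMap (1 / 2 : ℚ)))).elim (· ?_) (· ?_)
  · linear_combination -hcos
  · rw [eq_ratCast, Rat.cast_div, Rat.cast_one, Rat.cast_ofNat]
    linear_combination (-1 / 2) * hsin

end BaseOrders

section Xi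

/-- The order of the Bessel function in `Xi d ℓ`, as a rational number. -/
def xiOrder (d ℓ : ℕ) : ℚ :=
  ℓ + d / 2 - 1

variable {d ℓ p : ℕ} {r : ℝ}

lemma xiOrder_add (d ℓ p : ℕ) : xiOrder d (ℓ + p) = xiOrder d ℓ + p := by
  rw [xiOrder, xiOrder, Nat.cast_add]
  ring

lemma natCast_le_xiOrder (hd : 2 ≤ d) : (ℓ : ℚ) ≤ xiOrder d ℓ := by
  have hd' : (2 : ℚ) ≤ d := by exact_mod_cast hd
  rw [xiOrder]
  linarith

lemma neg_one_lt_xiOrder (hd : 2 ≤ d) : (-1 : ℝ) < xiOrder d ℓ := by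
  have h := (neg_one_lt_zero.trans_le (Nat.cast_nonneg ℓ)).trans_le (natCast_le_xiOrder hd)
  exact_mod_cast h

lemma Xi_eq_reducedBessel (d ℓ : ℕ) (hr : 0 < r) :
    Xi d ℓ r = (1 / 2) ^ (xiOrder d ℓ : ℝ) *
      (r ^ ℓ * reducedBessel (xiOrder d ℓ) (r ^ 2 / 4)) := by
  have hν : (ℓ : ℝ) + d / 2 - 1 = xiOrder d ℓ := by simp [xiOrder]
  have hpow : r ^ ℓ = r ^ (((2 : ℝ) - d) / 2) * r ^ (xiOrder d ℓ : ℝ) := by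
    rw [← Real.rpow_add hr, ← Real.rpow_natCast, ← hν]
    ring_nf
  rw [hpow, Xi, besselJ, reducedBessel, hν, mul_assoc (r ^ _), mul_left_comm ((1 / 2 : ℝ) ^ _)]
  refine congrArg _ ?_
  rw [← mul_assoc, ← tsum_mul_left]
  refine tsum_congr fun k => ?_
  have hk : (r / 2) ^ (2 * (k : ℝ)) = (r ^ 2 / 4) ^ k := by
    rw [show (2 : ℝ) * k = (2 * k : ℕ) by push_cast; rfl, Real.rpow_natCast, pow_mul]
    ring
  rw [reducedBesselCoeff, Real.rpow_add (by positivity), hk, div_eq_mul_one_div r 2,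
    Real.mul_rpow hr.le (by positivity)]
  ring

lemma mul_reducedBessel_eq_of_deriv_Xi_eq_zero (hd : 2 ≤ d) (hr : 0 < r)
    (h : deriv (Xi d ℓ) r = 0) :
    ℓ * reducedBessel (xiOrder d ℓ) (r ^ 2 / 4) =
      2 * (r ^ 2 / 4) * reducedBessel (xiOrder d ℓ + 1) (r ^ 2 / 4) := by
  set ν : ℝ := (xiOrder d ℓ : ℝ)
  have hderiv : HasDerivAt (Xi d ℓ) ((1 / 2) ^ ν *
      (ℓ * r ^ (ℓ - 1) * reducedBessel ν (r ^ 2 / 4) +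
        r ^ ℓ * (-reducedBessel (ν + 1) (r ^ 2 / 4) * (r / 2)))) r := by
    refine (((hasDerivAt_pow ℓ r).mul (hasDerivAt_reducedBessel_sq_div_four
      (neg_one_lt_xiOrder hd) r)).const_mul _).congr_of_eventuallyEq ?_
    filter_upwards [lt_mem_nhds hr] with s hs using Xi_eq_reducedBessel d ℓ hs
  have hzero := (mul_eq_zero.1 (hderiv.deriv.symm.trans h)).resolve_left (by positivity)
  have hpow : r * (ℓ * r ^ (ℓ - 1)) = ℓ * r ^ ℓ := by
    cases ℓ with
    | zero => simp
    | succ n => rw [Nat.add_sub_cancel, pow_succ]; ring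
  refine mul_left_cancel₀ (pow_ne_zero ℓ hr.ne') ?_
  linear_combination r * hzero - reducedBessel ν (r ^ 2 / 4) * hpow

lemma reducedBessel_ne_zero_of_deriv_Xi_eq_zero (hd : 2 ≤ d) (hr : 0 < r)
    (h : deriv (Xi d ℓ) r = 0) : reducedBessel (xiOrder d ℓ) (r ^ 2 / 4) ≠ 0 := by
  intro h0
  have heq := mul_reducedBessel_eq_of_deriv_Xi_eq_zero hd hr h
  rw [h0, mul_zero, eq_comm, mul_eq_zero, or_iff_right (by positivity)] at heq
  exact (reducedBessel_ne_zero_or (neg_one_lt_xiOrder hd) (by positivity)).elim (· h0) (· heq)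

lemma isAlgebraic_sq_div_four (hr : IsAlgebraic ℚ r) : IsAlgebraic ℚ (r ^ 2 / 4) :=
  (hr.pow 2).mul (isAlgebraic_algebraMap (4 : ℚ)).inv

lemma not_besselRatioIsAlgebraic_xiOrder (hd : 2 ≤ d) (hr : IsAlgebraic ℚ r) (hr0 : r ≠ 0) :
    ¬ BesselRatioIsAlgebraic (xiOrder d ℓ) (r ^ 2 / 4) := by
  have hz0 : r ^ 2 / 4 ≠ 0 := by positivity
  have hz := isAlgebraic_sq_div_four hr
  intro h
  rcases Nat.even_or_odd' d with ⟨e, rfl | rfl⟩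
  · refine not_besselRatioIsAlgebraic_zero hz hz0 ?_
    have hν : xiOrder (2 * e) ℓ = 0 + (ℓ + (e - 1) : ℕ) := by
      push_cast [xiOrder, Nat.cast_sub (show 1 ≤ e by lia)]
      ring
    rw [hν] at h
    exact_mod_cast BesselRatioIsAlgebraic.of_add_natCast (q := 0) (by norm_num) hz hz0 _
      (by exact_mod_cast h)
  · refine not_besselRatioIsAlgebraic_neg_half hr hr0 ?_
    have hν : xiOrder (2 * e + 1) ℓ = -(1 / 2) + (ℓ + e : ℕ) := by
      push_cast [xiOrder]
      ring
    rw [hν] at h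
    have h' := BesselRatioIsAlgebraic.of_add_natCast (q := -(1 / 2)) (by norm_num) hz hz0 _
      (by exact_mod_cast h)
    rwa [Rat.cast_neg, Rat.cast_div, Rat.cast_one, Rat.cast_ofNat] at h'

theorem transcendental_of_deriv_Xi_eq_zero (hd : 2 ≤ d) (hr : 0 < r)
    (h : deriv (Xi d ℓ) r = 0) : Transcendental ℚ r := by
  intro hr'
  refine not_besselRatioIsAlgebraic_xiOrder hd hr' hr.ne' ⟨_, 1, ℓ / (2 * (r ^ 2 / 4)),
    reducedBessel_ne_zero_of_deriv_Xi_eq_zero hd hr h, isAlgebraic_one, ?_, .inl one_ne_zero,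
    (mul_one _).symm, ?_⟩
  · exact (isAlgebraic_algebraMap (ℓ : ℚ)).mul
      ((isAlgebraic_algebraMap (2 : ℚ)).mul (isAlgebraic_sq_div_four hr')).inv
  · rw [mul_div_assoc', eq_div_iff (by positivity)]
    linear_combination -mul_reducedBessel_eq_of_deriv_Xi_eq_zero hd hr h

theorem isAlgebraic_of_deriv_Xi_eq_zero (hd : 2 ≤ d) (hp : p ≠ 0) (hr : 0 < r)
    (h1 : deriv (Xi d ℓ) r = 0) (h2 : deriv (Xi d (ℓ + p)) r = 0) : IsAlgebraic ℚ r := by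
  have heq2 := mul_reducedBessel_eq_of_deriv_Xi_eq_zero hd hr h2
  rw [xiOrder_add] at heq2
  have hz : IsAlgebraic ℚ (r ^ 2 / 4) :=
    isAlgebraic_of_reducedBessel_eq (a := ℓ) ℓ.cast_nonneg (natCast_le_xiOrder hd) hp
      (reducedBessel_ne_zero_of_deriv_Xi_eq_zero hd hr h1)
      (by exact_mod_cast mul_reducedBessel_eq_of_deriv_Xi_eq_zero hd hr h1)
      (by exact_mod_cast heq2)
  refine .of_pow two_pos ?_
  rw [← div_mul_cancel₀ (r ^ 2) four_ne_zero]
  exact hz.mul (isAlgebraic_algebraMap (4 : ℚ))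

end Xi

theorem Xi_deriv_no_common_zeros (d ℓ p : ℕ) (hd : 2 ≤ d) (hp : 1 ≤ p) :
    ¬ ∃ r : ℝ, 0 < r ∧ deriv (Xi d ℓ) r = 0 ∧ deriv (Xi d (ℓ + p)) r = 0 := by
  rintro ⟨r, hr, h1, h2⟩
  exact transcendental_of_deriv_Xi_eq_zero hd hr h1
    (isAlgebraic_of_deriv_Xi_eq_zero hd (Nat.one_le_iff_ne_zero.1 hp) hr h1 h2)
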